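/- arXiv:0805.0814 — 5 statements merged into one kernel-verified Lean document; each statement's English description precedes it below -/
import Mathlib

section
/- Let d ≥ 4 be even. There exists a constant C = C(d) > 0 such that for every finite field F_q with q elements of characteristic greater than two and every subset E of the paraboloid S ⊂ F_q^d, the number Λ_4(E) of additive quadruples in E satisfies Λ_4(E) ≤ C q^{(d−2)/d} |E|^{(3d−2)/d}. -/
open Finset

noncomputable section

/-- The dot product on `F^n`. -/
def dotp {F : Type} [CommRing F] {n : ℕ} (x y : Fin n → F) : F := ∑ i, x i * y i

/-- The paraboloid `S = {(x̄, x_d) : x_d = x̄ ⬝ x̄}` in `F^d = F^{d-1} × F`. -/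
def parab (F : Type) [CommRing F] [Fintype F] [DecidableEq F] (d : ℕ) :
    Finset ((Fin (d - 1) → F) × F) :=
  Finset.univ.filter fun x => x.2 = dotp x.1 x.1

/-- `Λ₄(E)`: the number of additive quadruples `(x,y,z,w) ∈ E⁴` with `x + y = z + w`. -/
def lambda4 {F : Type} [CommRing F] [Fintype F] [DecidableEq F] {d : ℕ}
    (E : Finset ((Fin (d - 1) → F) × F)) : ℕ :=
  ((E ×ˢ E ×ˢ E ×ˢ E).filter fun t => t.1 + t.2.1 = t.2.2.1 + t.2.2.2).card


section sphere
variable {F : Type} [Field F] [Fintype F] [DecidableEq F]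

lemma sum_sq_eq (g : F → ℤ) (hF : ringChar F ≠ 2) :
    ∑ y : F, g (y ^ 2) = ∑ c : F, (quadraticChar F c + 1) * g c := by
  rw [← Finset.sum_fiberwise (s := Finset.univ) (g := fun y : F => y ^ 2)]
  refine Finset.sum_congr rfl fun c _ => ?_
  rw [← quadraticChar_card_sqrts hF c, Finset.sum_congr rfl (g := fun _ => g c)]
  · simp only [Finset.sum_const, nsmul_eq_mul]
    congr 3
    ext y; simp
  · intro y hy
    rw [(Finset.mem_filter.1 hy).2]

lemma chi_sq (b : F) (hb : b ≠ 0) : quadraticChar F b * quadraticChar F b = 1 := by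
  have := quadraticChar_sq_one hb
  rwa [sq] at this

lemma sum_chi (hF : ringChar F ≠ 2) (b : F) :
    ∑ y : F, quadraticChar F (b - y ^ 2) =
      quadraticChar F (-1) * ((Fintype.card F : ℤ) * (if b = 0 then 1 else 0) - 1) := by
  rw [sum_sq_eq (fun c => quadraticChar F (b - c)) hF]
  simp only [add_mul, one_mul, Finset.sum_add_distrib]
  have h0 : ∑ c : F, quadraticChar F (b - c) = 0 := by
    rw [← quadraticChar_sum_zero hF]
    exact Fintype.sum_equiv (Equiv.subLeft b) _ _ (fun _ => rfl)
  rw [h0, add_zero]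
  split_ifs with hb
  · subst hb
    have : ∀ c : F, quadraticChar F c * quadraticChar F (0 - c) =
        quadraticChar F (-1) * (1 - if c = 0 then 1 else 0) := by
      intro c
      rw [zero_sub, neg_eq_neg_one_mul, map_mul]
      split_ifs with hc
      · simp [hc]
      · linear_combination quadraticChar F (-1) * chi_sq c hc
    simp only [this, ← Finset.mul_sum, Finset.sum_sub_distrib]
    simp
  · have hJ : jacobiSum (quadraticChar F) (quadraticChar F) = - quadraticChar F (-1) := by
      have := jacobiSum_nontrivial_inv (χ := quadraticChar F) (quadraticChar_ne_one hF)
      rwa [(quadraticChar_isQuadratic F).inv] at this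
    rw [← Fintype.sum_equiv (Equiv.mulLeft₀ b hb)
      (fun c => quadraticChar F c * quadraticChar F (1 - c)) _ ?_]
    · rw [jacobiSum] at hJ
      rw [hJ]; ring
    · intro c
      simp only [Equiv.mulLeft₀_apply]
      rw [show b - b * c = b * (1 - c) by ring, map_mul, map_mul]
      linear_combination (-quadraticChar F c * quadraticChar F (1 - c)) * chi_sq b hb

lemma sum_chi2 (hF : ringChar F ≠ 2) (a : F) :
    ∑ x : F, ∑ y : F, quadraticChar F (a - x ^ 2 - y ^ 2) =
      (Fintype.card F : ℤ) * quadraticChar F (-1) * quadraticChar F a := by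
  simp only [sum_chi hF, ← Finset.mul_sum, Finset.sum_sub_distrib]
  have h : ∑ x : F, (if a - x ^ 2 = 0 then (1:ℤ) else 0) = quadraticChar F a + 1 := by
    rw [← quadraticChar_card_sqrts hF a]
    rw [Finset.sum_boole]
    congr 2
    ext y; simpa [sub_eq_zero] using eq_comm
  rw [h]
  simp
  ring

def sphN (F : Type) [Field F] [Fintype F] [DecidableEq F] (n : ℕ) (a : F) : ℤ :=
  ∑ z : Fin n → F, if z ⬝ᵥ z = a then 1 else 0

lemma sphN_succ (n : ℕ) (a : F) : sphN F (n + 1) a = ∑ x : F, sphN F n (a - x ^ 2) := by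
  unfold sphN
  rw [← Fintype.sum_prod_type']
  refine (Fintype.sum_equiv (Fin.consEquiv (fun _ => F)) _ _ ?_).symm
  rintro ⟨x, z⟩
  simp only [Fin.consEquiv, Equiv.coe_fn_mk, dotProduct, Fin.sum_univ_succ, Fin.cons_zero,
    Fin.cons_succ]
  congr 1
  rw [eq_sub_iff_add_eq, eq_iff_iff]
  constructor <;> intro h <;> linear_combination h

lemma sphN_eq (hF : ringChar F ≠ 2) (k : ℕ) : ∀ a : F, sphN F (2 * k + 1) a =
    ((Fintype.card F : ℤ) ^ k) ^ 2 +
      (Fintype.card F : ℤ) ^ k * quadraticChar F (-1) ^ k * quadraticChar F a := by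
  induction k with
  | zero =>
    intro a
    rw [sphN_succ]
    have h : ∑ x : F, (if a - x ^ 2 = 0 then (1:ℤ) else 0) = quadraticChar F a + 1 := by
      rw [← quadraticChar_card_sqrts hF a]
      rw [Finset.sum_boole]
      congr 2
      ext y; simpa [sub_eq_zero] using eq_comm
    simp [sphN]
    simp [eq_comm] at h ⊢
    linarith
  | succ k ih =>
    intro a
    rw [show 2 * (k + 1) + 1 = (2 * k + 1) + 1 + 1 by ring, sphN_succ]
    simp only [sphN_succ (2 * k + 1), ih, Finset.sum_add_distrib, ← Finset.mul_sum, sum_chi2 hF]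
    simp
    ring

lemma sphere_bound (hF : ringChar F ≠ 2) (k : ℕ) (a : F) :
    |((#{z : Fin (2 * k + 1) → F | z ⬝ᵥ z = a} : ℕ) : ℤ) - ((Fintype.card F : ℤ) ^ k) ^ 2| ≤
      (Fintype.card F : ℤ) ^ k := by
  have h := sphN_eq hF k a
  unfold sphN at h
  rw [Finset.sum_boole] at h
  rw [h, add_sub_cancel_left, mul_assoc, abs_mul]
  have h1 : ∀ b : F, |quadraticChar F b| ≤ 1 := by
    intro b
    rcases (quadraticChar_isQuadratic F) b with h | h | h <;> simp [h]
  have h2 : |quadraticChar F (-1) ^ k * quadraticChar F a| ≤ 1 := by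
    rw [abs_mul, abs_pow]
    exact mul_le_one₀ (pow_le_one₀ (abs_nonneg _) (h1 _)) (abs_nonneg _) (h1 _)
  rw [abs_of_nonneg (by positivity)]
  exact mul_le_of_le_one_right (by positivity) h2

lemma quad_bound (hF : ringChar F ≠ 2) (k : ℕ) (c : F) (hc : c ≠ 0) (b : Fin (2 * k + 1) → F)
    (e : F) :
    |((#{z : Fin (2 * k + 1) → F | c * (z ⬝ᵥ z) - z ⬝ᵥ b + e = 0} : ℕ) : ℤ) -
      ((Fintype.card F : ℤ) ^ k) ^ 2| ≤ (Fintype.card F : ℤ) ^ k := by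
  have h2 : (2 : F) ≠ 0 := Ring.two_ne_zero hF
  have h2c : 2 * c ≠ 0 := mul_ne_zero h2 hc
  have key : ∀ z : Fin (2 * k + 1) → F, ((2 * c) • z - b) ⬝ᵥ ((2 * c) • z - b) =
      4 * c * (c * (z ⬝ᵥ z) - z ⬝ᵥ b + e) + (b ⬝ᵥ b - 4 * c * e) := by
    intro z
    simp only [sub_dotProduct, dotProduct_sub, smul_dotProduct, dotProduct_smul, smul_eq_mul,
      dotProduct_comm b z]
    ring
  have h4c : 4 * c ≠ 0 := by
    rw [show (4:F) * c = 2 * (2 * c) by ring]; exact mul_ne_zero h2 h2c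
  have : #{z : Fin (2 * k + 1) → F | c * (z ⬝ᵥ z) - z ⬝ᵥ b + e = 0} =
      #{z : Fin (2 * k + 1) → F | z ⬝ᵥ z = b ⬝ᵥ b - 4 * c * e} := by
    refine Finset.card_bij (fun z _ => (2 * c) • z - b) ?_ ?_ ?_
    · intro z hz
      simp only [Finset.mem_filter, Finset.mem_univ, true_and] at hz ⊢
      rw [key, hz]; ring
    · intro z _ w _ h
      exact smul_right_injective _ h2c (sub_left_injective h)
    · intro y hy
      simp only [Finset.mem_filter, Finset.mem_univ, true_and] at hy
      have hy' : (2 * c) • ((2 * c)⁻¹ • (y + b)) - b = y := by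
        rw [smul_inv_smul₀ h2c, add_sub_cancel_right]
      refine ⟨(2 * c)⁻¹ • (y + b), ?_, hy'⟩
      simp only [Finset.mem_filter, Finset.mem_univ, true_and]
      have := key ((2 * c)⁻¹ • (y + b))
      rw [hy', hy] at this
      have h3 : 4 * c * (c * ((2 * c)⁻¹ • (y + b) ⬝ᵥ (2 * c)⁻¹ • (y + b)) -
        (2 * c)⁻¹ • (y + b) ⬝ᵥ b + e) = 0 := by linear_combination -this
      exact (mul_eq_zero.1 h3).resolve_left h4c
  rw [this]
  exact sphere_bound hF k _

lemma affine_bound {n : ℕ} (b : Fin n → F) (hb : b ≠ 0) (e : F) :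
    Fintype.card F * #{z : Fin n → F | z ⬝ᵥ b = e} ≤ Fintype.card F ^ n := by
  obtain ⟨i, hi⟩ := Function.ne_iff.1 hb
  have : #((Finset.univ : Finset F) ×ˢ ({z : Fin n → F | z ⬝ᵥ b = e} : Finset _)) ≤
      #(Finset.univ : Finset (Fin n → F)) := by
    refine Finset.card_le_card_of_injOn (fun p => p.2 + Pi.single i p.1) (by simp) ?_
    rintro ⟨s, z⟩ h1 ⟨t, w⟩ h2 h
    simp only [Finset.coe_product, Set.mem_prod, Finset.coe_univ, Set.mem_univ, true_and,
      Finset.mem_coe, Finset.mem_filter, Finset.mem_univ] at h1 h2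
    simp only at h
    have h' := congrArg (fun v => v ⬝ᵥ b) h
    simp only [add_dotProduct, h1, h2, single_dotProduct] at h'
    have hst : s = t := mul_right_cancel₀ hi (add_left_cancel h')
    subst hst
    simpa using h
  simpa [Finset.card_product] using this
lemma inter_count {Z : Type} [Fintype Z] (a b : Z → F) :
    (Fintype.card F : ℤ) * (#{z : Z | a z = 0 ∧ b z = 0} : ℕ) + Fintype.card Z =
      ∑ r ∈ Finset.univ.erase (0 : F), ((#{z : Z | a z - r * b z = 0} : ℕ) : ℤ) +
        (#{z : Z | a z = 0} : ℕ) + (#{z : Z | b z = 0} : ℕ) := by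
  simp only [← Finset.sum_boole]
  rw [Finset.sum_comm, Finset.mul_sum, Fintype.card_eq_sum_ones (α := Z)]
  push_cast
  rw [← Finset.sum_add_distrib, ← Finset.sum_add_distrib, ← Finset.sum_add_distrib]
  refine Finset.sum_congr rfl fun z _ => ?_
  by_cases hb : b z = 0
  · by_cases ha : a z = 0
    · have : 0 < Fintype.card F := Fintype.card_pos
      simp [ha, hb, Finset.card_erase_of_mem]
      push_cast [Nat.cast_sub this]
      ring
    · simp [ha, hb]
  · by_cases ha : a z = 0
    · simp only [ha, hb, and_false, if_false, if_true]
      rw [Finset.sum_eq_zero]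
      · simp
      · intro r hr
        have := Finset.ne_of_mem_erase hr
        simp [hb, this]
    · simp only [ha, hb, and_false, if_false]
      rw [Finset.sum_eq_single (a z / b z)]
      · simp [hb]
      · intro r _ hr
        rw [if_neg]
        intro h
        apply hr
        rw [eq_div_iff hb]
        linear_combination -h
      · intro h
        exact absurd (Finset.mem_erase.2 ⟨div_ne_zero ha hb, Finset.mem_univ _⟩) h

/-- The quadratic polynomial attached to a pair. -/
def Qp {n : ℕ} (P : (Fin n → F) × (Fin n → F)) (z : Fin n → F) : F :=
  (z - P.1) ⬝ᵥ (z - P.2)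

/-- Two pairs have the same polynomial. -/
def simP {n : ℕ} (P R : (Fin n → F) × (Fin n → F)) : Prop :=
  P.1 + P.2 = R.1 + R.2 ∧ P.1 ⬝ᵥ P.2 = R.1 ⬝ᵥ R.2

instance {n : ℕ} (P R : (Fin n → F) × (Fin n → F)) : Decidable (simP P R) := by
  unfold simP; infer_instance

lemma Qp_eq {n : ℕ} (P : (Fin n → F) × (Fin n → F)) (z : Fin n → F) :
    Qp P z = z ⬝ᵥ z - z ⬝ᵥ (P.1 + P.2) + P.1 ⬝ᵥ P.2 := by
  simp only [Qp, sub_dotProduct, dotProduct_sub, dotProduct_add, dotProduct_comm P.1 z]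
  ring

lemma Qp_zero (hF : ringChar F ≠ 2) (k : ℕ)
    (P : (Fin (2 * k + 1) → F) × (Fin (2 * k + 1) → F)) :
    |((#{z | Qp P z = 0} : ℕ) : ℤ) - ((Fintype.card F : ℤ) ^ k) ^ 2| ≤
      (Fintype.card F : ℤ) ^ k := by
  have := quad_bound hF k 1 one_ne_zero (P.1 + P.2) (P.1 ⬝ᵥ P.2)
  simpa only [one_mul, ← Qp_eq] using this

lemma Qp_r (hF : ringChar F ≠ 2) (k : ℕ)
    (P R : (Fin (2 * k + 1) → F) × (Fin (2 * k + 1) → F)) (r : F) (hr : r ≠ 1) :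
    ((#{z | Qp P z - r * Qp R z = 0} : ℕ) : ℤ) ≤ ((Fintype.card F : ℤ) ^ k) ^ 2 +
      (Fintype.card F : ℤ) ^ k := by
  have := quad_bound hF k (1 - r) (sub_ne_zero.2 hr.symm) (P.1 + P.2 - r • (R.1 + R.2))
    (P.1 ⬝ᵥ P.2 - r * (R.1 ⬝ᵥ R.2))
  have h2 : ∀ z : Fin (2 * k + 1) → F, (1 - r) * (z ⬝ᵥ z) - z ⬝ᵥ (P.1 + P.2 - r • (R.1 + R.2)) +
    (P.1 ⬝ᵥ P.2 - r * (R.1 ⬝ᵥ R.2)) = Qp P z - r * Qp R z := by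
    intro z
    rw [Qp_eq, Qp_eq, dotProduct_sub, dotProduct_smul, smul_eq_mul]
    ring
  simp only [h2] at this
  linarith [(abs_le.1 this).2]

lemma Qp_one (k : ℕ)
    (P R : (Fin (2 * k + 1) → F) × (Fin (2 * k + 1) → F)) :
    ((#{z | Qp P z - 1 * Qp R z = 0} : ℕ) : ℤ) ≤ ((Fintype.card F : ℤ) ^ k) ^ 2 +
      if simP P R then (Fintype.card F : ℤ) * ((Fintype.card F : ℤ) ^ k) ^ 2 else 0 := by
  have hq : (0 : ℤ) < Fintype.card F := by exact_mod_cast Fintype.card_pos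
  have h2 : ∀ z : Fin (2 * k + 1) → F, Qp P z - 1 * Qp R z =
      (P.1 ⬝ᵥ P.2 - R.1 ⬝ᵥ R.2) - z ⬝ᵥ (P.1 + P.2 - (R.1 + R.2)) := by
    intro z
    rw [Qp_eq, Qp_eq, dotProduct_sub]
    ring
  by_cases h : simP P R
  · rw [if_pos h]
    have : #{z | Qp P z - 1 * Qp R z = 0} ≤ Fintype.card F ^ (2 * k + 1) := by
      refine (Finset.card_le_univ _).trans ?_
      simp
    have h3 : ((#{z | Qp P z - 1 * Qp R z = 0} : ℕ) : ℤ) ≤ (Fintype.card F : ℤ) ^ (2 * k + 1) := by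
      exact_mod_cast this
    have h4 : (Fintype.card F : ℤ) ^ (2 * k + 1) =
      (Fintype.card F : ℤ) * ((Fintype.card F : ℤ) ^ k) ^ 2 := by ring
    rw [h4] at h3
    have : (0:ℤ) ≤ ((Fintype.card F : ℤ) ^ k) ^ 2 := by positivity
    linarith
  · rw [if_neg h, add_zero]
    by_cases hu : P.1 + P.2 = R.1 + R.2
    · have : P.1 ⬝ᵥ P.2 - R.1 ⬝ᵥ R.2 ≠ 0 := fun h' => h ⟨hu, sub_eq_zero.1 h'⟩
      simp only [h2, hu, sub_self, dotProduct_zero, sub_zero, this]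
      simp
    · have := affine_bound (P.1 + P.2 - (R.1 + R.2)) (sub_ne_zero.2 hu)
        (P.1 ⬝ᵥ P.2 - R.1 ⬝ᵥ R.2)
      have h3 : ∀ z : Fin (2 * k + 1) → F, Qp P z - 1 * Qp R z = 0 ↔
        z ⬝ᵥ (P.1 + P.2 - (R.1 + R.2)) = P.1 ⬝ᵥ P.2 - R.1 ⬝ᵥ R.2 := by
        intro z; rw [h2, sub_eq_zero, eq_comm]
      simp only [h3]
      have h5 : (Fintype.card F : ℤ) * (#{z | z ⬝ᵥ (P.1 + P.2 - (R.1 + R.2)) =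
        P.1 ⬝ᵥ P.2 - R.1 ⬝ᵥ R.2} : ℕ) ≤ (Fintype.card F : ℤ) ^ (2 * k + 1) := by exact_mod_cast this
      have h4 : (Fintype.card F : ℤ) ^ (2 * k + 1) =
        (Fintype.card F : ℤ) * ((Fintype.card F : ℤ) ^ k) ^ 2 := by ring
      rw [h4] at h5
      exact le_of_mul_le_mul_left h5 hq

lemma inter_bound (hF : ringChar F ≠ 2) (k : ℕ)
    (P R : (Fin (2 * k + 1) → F) × (Fin (2 * k + 1) → F)) :
    (Fintype.card F : ℤ) * (#{z | Qp P z = 0 ∧ Qp R z = 0} : ℕ) ≤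
      ((Fintype.card F : ℤ) ^ k) ^ 2 + (Fintype.card F : ℤ) * (Fintype.card F : ℤ) ^ k +
      if simP P R then (Fintype.card F : ℤ) * ((Fintype.card F : ℤ) ^ k) ^ 2 else 0 := by
  have h := inter_count (Qp P) (Qp R)
  have hZ : (Fintype.card (Fin (2 * k + 1) → F) : ℤ) =
      (Fintype.card F : ℤ) * ((Fintype.card F : ℤ) ^ k) ^ 2 := by
    simp; ring
  rw [hZ] at h
  have h1 : (1 : F) ∈ Finset.univ.erase (0 : F) := by simp
  rw [← Finset.add_sum_erase _ _ h1] at h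
  have h2 : ∑ r ∈ (Finset.univ.erase (0 : F)).erase 1,
      ((#{z | Qp P z - r * Qp R z = 0} : ℕ) : ℤ) ≤
      ∑ r ∈ (Finset.univ.erase (0 : F)).erase 1, (((Fintype.card F : ℤ) ^ k) ^ 2 +
      (Fintype.card F : ℤ) ^ k) :=
    Finset.sum_le_sum fun r hr => Qp_r hF k P R r (Finset.ne_of_mem_erase hr)
  have hc : (#((Finset.univ.erase (0 : F)).erase 1) : ℤ) = Fintype.card F - 2 := by
    have e1 := Finset.card_erase_add_one h1
    have e2 := Finset.card_erase_add_one (Finset.mem_univ (0 : F))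
    rw [Finset.card_univ] at e2
    omega
  rw [Finset.sum_const, nsmul_eq_mul, hc] at h2
  have h3 := Qp_one k P R
  have h4 := (abs_le.1 (Qp_zero hF k P)).2
  have h5 := (abs_le.1 (Qp_zero hF k R)).2
  linarith

/-- Quadruple count for a set of base points. -/
def LL {n : ℕ} (A : Finset (Fin n → F)) : ℕ :=
  #{t ∈ (A ×ˢ A) ×ˢ (A ×ˢ A) | simP t.1 t.2}

/-- Incidence function. -/
def ff {n : ℕ} (A : Finset (Fin n → F)) (z : Fin n → F) : ℤ :=
  ∑ P ∈ A ×ˢ A, if Qp P z = 0 then 1 else 0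

lemma sum_ff_lower (hF : ringChar F ≠ 2) (k : ℕ) (A : Finset (Fin (2 * k + 1) → F)) :
    (#A : ℤ) ^ 2 * (((Fintype.card F : ℤ) ^ k) ^ 2 - (Fintype.card F : ℤ) ^ k) ≤ ∑ z, ff A z := by
  unfold ff
  rw [Finset.sum_comm]
  have : ∑ P ∈ A ×ˢ A, (((Fintype.card F : ℤ) ^ k) ^ 2 - (Fintype.card F : ℤ) ^ k) ≤
      ∑ P ∈ A ×ˢ A, ∑ z : Fin (2 * k + 1) → F, if Qp P z = 0 then (1:ℤ) else 0 := by
    refine Finset.sum_le_sum fun P _ => ?_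
    rw [Finset.sum_boole]
    linarith [(abs_le.1 (Qp_zero hF k P)).1]
  refine le_trans (le_of_eq ?_) this
  rw [Finset.sum_const, nsmul_eq_mul, Finset.card_product]
  push_cast; ring

lemma sum_ff_sq (hF : ringChar F ≠ 2) (k : ℕ) (A : Finset (Fin (2 * k + 1) → F)) :
    (Fintype.card F : ℤ) * ∑ z, ff A z ^ 2 ≤
      (#A : ℤ) ^ 4 * (((Fintype.card F : ℤ) ^ k) ^ 2 +
        (Fintype.card F : ℤ) * (Fintype.card F : ℤ) ^ k) +
      (Fintype.card F : ℤ) * ((Fintype.card F : ℤ) ^ k) ^ 2 * LL A := by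
  have h1 : ∑ z, ff A z ^ 2 = ∑ t ∈ (A ×ˢ A) ×ˢ (A ×ˢ A),
      ((#{z | Qp t.1 z = 0 ∧ Qp t.2 z = 0} : ℕ) : ℤ) := by
    simp only [← Finset.sum_boole]
    rw [Finset.sum_comm]
    refine Finset.sum_congr rfl fun z _ => ?_
    rw [sq, ff, Finset.sum_mul_sum, ← Finset.sum_product']
    refine Finset.sum_congr rfl fun t _ => ?_
    by_cases h : Qp t.1 z = 0 <;> by_cases h' : Qp t.2 z = 0 <;> simp [h, h']
  rw [h1, Finset.mul_sum]
  refine (Finset.sum_le_sum fun t _ => inter_bound hF k t.1 t.2).trans (le_of_eq ?_)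
  rw [Finset.sum_add_distrib, Finset.sum_const, nsmul_eq_mul, LL, ← Finset.sum_boole,
    Finset.mul_sum]
  congr 1
  · simp only [Finset.card_product]; push_cast; ring
  · refine Finset.sum_congr rfl fun t _ => ?_
    split_ifs <;> simp

lemma LL_le {n : ℕ} (A : Finset (Fin n → F)) : (LL A : ℤ) ≤ ∑ z ∈ A, ff A z := by
  unfold ff
  rw [← Finset.sum_product', Finset.sum_boole]
  norm_cast
  unfold LL
  refine Finset.card_le_card_of_injOn (fun t => (t.2.1, t.1)) ?_ ?_
  · rintro ⟨P, x, y⟩ h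
    simp only [Finset.mem_coe, Finset.mem_filter, Finset.mem_product] at h ⊢
    simp only [simP] at h
    obtain ⟨⟨hP, hx, hy⟩, h1, h2⟩ := h
    refine ⟨⟨hx, hP⟩, ?_⟩
    rw [Qp_eq, h1, h2, dotProduct_add]
    ring
  · rintro ⟨P, x, y⟩ h ⟨P', x', y'⟩ h' e
    simp only [Finset.mem_coe, Finset.mem_filter, Finset.mem_product] at h h'
    simp only [simP] at h h'
    simp only [Prod.mk.injEq] at e
    obtain ⟨rfl, rfl⟩ := e
    have : x + y = x + y' := h.2.1.symm.trans h'.2.1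
    rw [add_left_cancel this]

lemma LL_trivial {n : ℕ} (A : Finset (Fin n → F)) : LL A ≤ #A ^ 3 := by
  have h : LL A ≤ #(A ×ˢ (A ×ˢ A)) := by
    unfold LL
    refine Finset.card_le_card_of_injOn (fun t => (t.2.1, t.1)) ?_ ?_
    · rintro ⟨P, x, y⟩ h
      simp only [Finset.mem_coe, Finset.mem_filter, Finset.mem_product] at h ⊢
      simp only [simP] at h
      exact ⟨h.1.2.1, h.1.1⟩
    · rintro ⟨P, x, y⟩ h ⟨P', x', y'⟩ h' e
      simp only [Finset.mem_coe, Finset.mem_filter, Finset.mem_product] at h h'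
      simp only [simP] at h h'
      simp only [Prod.mk.injEq] at e
      obtain ⟨rfl, rfl⟩ := e
      have : x + y = x + y' := h.2.1.symm.trans h'.2.1
      rw [add_left_cancel this]
  refine h.trans (le_of_eq ?_)
  simp only [Finset.card_product]; ring

/-- Second moment inequality (multiplied by `q ^ 2`). -/
lemma second_moment (hF : ringChar F ≠ 2) (k : ℕ) (A : Finset (Fin (2 * k + 1) → F)) :
    ∑ z, ((Fintype.card F : ℤ) * ff A z - (#A : ℤ) ^ 2) ^ 2 ≤
      (Fintype.card F : ℤ) ^ 2 * (3 * (#A : ℤ) ^ 4 * (Fintype.card F : ℤ) ^ k +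
        ((Fintype.card F : ℤ) ^ k) ^ 2 * LL A) := by
  have hq : (1 : ℤ) ≤ Fintype.card F := by exact_mod_cast Fintype.card_pos
  have h1 := sum_ff_lower hF k A
  have h2 := sum_ff_sq hF k A
  have hZ : (Fintype.card (Fin (2 * k + 1) → F) : ℤ) =
      (Fintype.card F : ℤ) * ((Fintype.card F : ℤ) ^ k) ^ 2 := by
    simp; ring
  have e : ∑ z, ((Fintype.card F : ℤ) * ff A z - (#A : ℤ) ^ 2) ^ 2 =
      (Fintype.card F : ℤ) * ((Fintype.card F : ℤ) * ∑ z, ff A z ^ 2)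
      - 2 * (Fintype.card F : ℤ) * (#A : ℤ) ^ 2 * ∑ z, ff A z +
      (Fintype.card F : ℤ) * ((Fintype.card F : ℤ) ^ k) ^ 2 * (#A : ℤ) ^ 4 := by
    rw [← hZ, Finset.mul_sum, Finset.mul_sum, Finset.mul_sum, ← Finset.sum_sub_distrib,
      ← Finset.card_univ (α := Fin (2 * k + 1) → F), ← nsmul_eq_mul, ← Finset.sum_const, ← Finset.sum_add_distrib]
    refine Finset.sum_congr rfl fun z _ => ?_
    ring
  rw [e]
  set q : ℤ := (Fintype.card F : ℤ)
  set s : ℤ := q ^ k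
  have hs : 0 ≤ s := by positivity
  have h1' := mul_le_mul_of_nonneg_left h1 (show 0 ≤ 2 * q * (#A : ℤ) ^ 2 by positivity)
  have h2' := mul_le_mul_of_nonneg_left h2 (show 0 ≤ q by positivity)
  have h3 : 0 ≤ (q - 1) * (2 * q * (#A : ℤ) ^ 4 * s) :=
    mul_nonneg (by linarith) (by positivity)
  linarith

lemma main_ineq (hF : ringChar F ≠ 2) (k : ℕ) (A : Finset (Fin (2 * k + 1) → F))
    (h : (#A : ℤ) ^ 3 ≤ (Fintype.card F : ℤ) * LL A) :
    ((Fintype.card F : ℤ) * LL A - (#A : ℤ) ^ 3) ^ 2 ≤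
      (Fintype.card F : ℤ) ^ 2 * (#A * (3 * (#A : ℤ) ^ 4 * (Fintype.card F : ℤ) ^ k +
        ((Fintype.card F : ℤ) ^ k) ^ 2 * LL A)) := by
  have hq : (0 : ℤ) ≤ Fintype.card F := by positivity
  have h1 : (Fintype.card F : ℤ) * LL A - (#A : ℤ) ^ 3 ≤
      ∑ z ∈ A, ((Fintype.card F : ℤ) * ff A z - (#A : ℤ) ^ 2) := by
    rw [Finset.sum_sub_distrib, ← Finset.mul_sum, Finset.sum_const, nsmul_eq_mul]
    have := mul_le_mul_of_nonneg_left (LL_le A) hq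
    linarith
  calc _ ≤ (∑ z ∈ A, ((Fintype.card F : ℤ) * ff A z - (#A : ℤ) ^ 2)) ^ 2 :=
        pow_le_pow_left₀ (by linarith) h1 2
    _ ≤ #A * ∑ z ∈ A, ((Fintype.card F : ℤ) * ff A z - (#A : ℤ) ^ 2) ^ 2 :=
        sq_sum_le_card_mul_sum_sq
    _ ≤ #A * ∑ z, ((Fintype.card F : ℤ) * ff A z - (#A : ℤ) ^ 2) ^ 2 := by
        refine mul_le_mul_of_nonneg_left ?_ (by positivity)
        exact Finset.sum_le_sum_of_subset_of_nonneg (Finset.subset_univ _)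
          fun z _ _ => sq_nonneg _
    _ ≤ #A * ((Fintype.card F : ℤ) ^ 2 * (3 * (#A : ℤ) ^ 4 * (Fintype.card F : ℤ) ^ k +
        ((Fintype.card F : ℤ) ^ k) ^ 2 * LL A)) :=
        mul_le_mul_of_nonneg_left (second_moment hF k A) (by positivity)
    _ = _ := by ring

end sphere

lemma real_final (k : ℕ) (hk : 1 ≤ k) (q N L : ℝ) (hq : 1 ≤ q) (hN : 0 < N) (hL : 0 ≤ L)
    (h1 : L ≤ N ^ 3) (h2 : N ≤ q ^ (2 * k + 1))
    (h3 : N ^ 3 ≤ q * L →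
      (q * L - N ^ 3) ^ 2 ≤ q ^ 2 * (N * (3 * N ^ 4 * q ^ k + (q ^ k) ^ 2 * L))) :
    L ≤ 4 * q ^ ((((2 * k + 2 : ℕ) : ℝ) - 2) / (2 * k + 2 : ℕ)) *
      N ^ ((3 * ((2 * k + 2 : ℕ) : ℝ) - 2) / (2 * k + 2 : ℕ)) := by
  have hq0 : 0 < q := by linarith
  have hk' : (1 : ℝ) ≤ k := by exact_mod_cast hk
  set θ : ℝ := 1 / ((k : ℝ) + 1) with hθ
  have hθ0 : 0 < θ := by positivity
  have hθ1 : θ ≤ 1 / 2 := by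
    apply one_div_le_one_div_of_le <;> linarith
  set s : ℝ := q ^ k with hs
  have hs0 : 0 < s := by positivity
  set ρ : ℝ := s / N with hρ
  have hρ0 : 0 < ρ := by positivity
  have e1 : q ^ ((((2 * k + 2 : ℕ) : ℝ) - 2) / (2 * k + 2 : ℕ)) = s ^ θ := by
    rw [hs, ← Real.rpow_natCast, ← Real.rpow_mul hq0.le]
    congr 1
    rw [hθ]; push_cast; field_simp; ring
  have e2 : N ^ ((3 * ((2 * k + 2 : ℕ) : ℝ) - 2) / (2 * k + 2 : ℕ)) = N ^ 3 / N ^ θ := by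
    rw [← Real.rpow_natCast, ← Real.rpow_sub hN]
    congr 1
    rw [hθ]; push_cast; field_simp
  have e3 : s ^ θ / N ^ θ = ρ ^ θ := by rw [hρ, Real.div_rpow hs0.le hN.le]
  have e4 : 4 * s ^ θ * (N ^ 3 / N ^ θ) = 4 * ρ ^ θ * N ^ 3 := by rw [← e3]; ring
  rw [e1, e2, e4]
  have hN3 : 0 < N ^ 3 := by positivity
  rw [← div_le_iff₀ hN3]
  set lam : ℝ := L / N ^ 3 with hlam
  have hLl : L = lam * N ^ 3 := by rw [hlam]; field_simp
  have hl0 : 0 ≤ lam := by positivity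
  have hl1 : lam ≤ 1 := by rw [hlam, div_le_one hN3]; exact h1
  have hsρ : s = ρ * N := by rw [hρ]; field_simp
  rcases le_or_gt 1 ρ with hρ1 | hρ1
  · have := Real.one_le_rpow hρ1 hθ0.le
    linarith
  rcases le_or_gt (q * lam) 2 with hc | hc
  · have hA : (q ^ (k + 1))⁻¹ ≤ ρ := by
      rw [hρ, le_div_iff₀ hN, inv_mul_le_iff₀ (by positivity), hs, ← pow_add]
      refine h2.trans (le_of_eq ?_); ring
    have hB : (q ^ (k + 1))⁻¹ ^ θ = q⁻¹ := by
      rw [Real.inv_rpow (by positivity), ← Real.rpow_natCast, ← Real.rpow_mul hq0.le]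
      have : ((k + 1 : ℕ) : ℝ) * θ = 1 := by rw [hθ]; push_cast; field_simp
      rw [this, Real.rpow_one]
    have hC := Real.rpow_le_rpow (by positivity) hA hθ0.le
    rw [hB] at hC
    have hD : lam ≤ 2 * q⁻¹ := by
      rw [← div_eq_mul_inv, le_div_iff₀ hq0]; linarith
    have : 0 < q⁻¹ := by positivity
    linarith
  · have hge : N ^ 3 ≤ q * L := by
      rw [hLl]; nlinarith
    have h := h3 hge
    rw [hLl, hsρ] at h
    have h' : (q * lam - 1) ^ 2 * N ^ 6 ≤ (q ^ 2 * (3 * ρ + ρ ^ 2 * lam)) * N ^ 6 := by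
      calc _ = (q * (lam * N ^ 3) - N ^ 3) ^ 2 := by ring
        _ ≤ _ := h
        _ = _ := by ring
    have h'' := le_of_mul_le_mul_right h' (by positivity)
    have hhalf : (q * lam / 2) ^ 2 ≤ (q * lam - 1) ^ 2 :=
      pow_le_pow_left₀ (by positivity) (by linarith) 2
    have h5 : ρ ^ 2 * lam ≤ ρ := by
      have : ρ * lam ≤ 1 := mul_le_one₀ hρ1.le hl0 hl1
      nlinarith
    have h6 : q ^ 2 * (lam ^ 2) ≤ q ^ 2 * (16 * ρ) := by
      have : q ^ 2 * (3 * ρ + ρ ^ 2 * lam) ≤ q ^ 2 * (4 * ρ) := by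
        apply mul_le_mul_of_nonneg_left _ (by positivity); linarith
      nlinarith
    have h7 := le_of_mul_le_mul_left h6 (by positivity)
    have h8 : lam ≤ 4 * ρ ^ (1 / 2 : ℝ) := by
      rw [← Real.sqrt_eq_rpow]
      refine (sq_le_sq₀ hl0 (by positivity)).1 ?_
      rw [mul_pow, Real.sq_sqrt hρ0.le]; linarith
    have h9 := Real.rpow_le_rpow_of_exponent_ge hρ0 hρ1.le hθ1
    linarith

/-- For even `d ≥ 4`, `Λ₄(E) ≲ q^{(d-2)/d} |E|^{(3d-2)/d}`. -/
theorem additive_quadruples_bound (d : ℕ) (hd4 : 4 ≤ d) (hdeven : Even d) :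
    ∃ C : ℝ, 0 < C ∧
      ∀ (F : Type) [Field F] [Fintype F] [DecidableEq F], 2 < ringChar F →
        ∀ E : Finset ((Fin (d - 1) → F) × F), E ⊆ parab F d →
          (lambda4 E : ℝ) ≤
            C * (Fintype.card F : ℝ) ^ (((d : ℝ) - 2) / d) *
              (E.card : ℝ) ^ ((3 * (d : ℝ) - 2) / d) := by
  obtain ⟨k, rfl⟩ : ∃ k, d = 2 * k + 2 := by
    obtain ⟨r, hr⟩ := hdeven
    exact ⟨r - 1, by omega⟩
  refine ⟨4, by norm_num, ?_⟩
  intro F _ _ _ hF2 E hE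
  have hF : ringChar F ≠ 2 := by omega
  have hfst : Set.InjOn (Prod.fst : (Fin (2 * k + 2 - 1) → F) × F → _) (E : Set _) := by
    intro x hx y hy hxy
    have h1 := hE hx
    have h2 := hE hy
    simp only [parab, Finset.mem_filter, Finset.mem_univ, true_and] at h1 h2
    exact Prod.ext hxy (by rw [h1, h2, hxy])
  rcases Finset.eq_empty_or_nonempty E with rfl | hne
  · have : lambda4 (∅ : Finset ((Fin (2 * k + 2 - 1) → F) × F)) = 0 := by simp [lambda4]
    rw [this]
    push_cast
    positivity
  let A : Finset (Fin (2 * k + 1) → F) := E.image Prod.fst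
  have hcard : #A = #E := Finset.card_image_of_injOn hfst
  have hmem : ∀ x ∈ E, x.1 ∈ A := fun x hx => Finset.mem_image_of_mem _ hx
  have hle : lambda4 E ≤ LL A := by
    unfold lambda4 LL
    refine Finset.card_le_card_of_injOn
      (fun t => ((t.1.1, t.2.1.1), (t.2.2.1.1, t.2.2.2.1))) ?_ ?_
    · rintro ⟨x, y, z, w⟩ h
      simp only [Finset.mem_coe, Finset.mem_filter, Finset.mem_product] at h ⊢
      obtain ⟨⟨hx, hy, hz, hw⟩, h⟩ := h
      refine ⟨⟨⟨hmem x hx, hmem y hy⟩, hmem z hz, hmem w hw⟩, congrArg Prod.fst h, ?_⟩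
      have hp : ∀ u ∈ E, u.2 = u.1 ⬝ᵥ u.1 := by
        intro u hu
        have := hE hu
        simp only [parab, Finset.mem_filter, Finset.mem_univ, true_and] at this
        exact this
      have e1 : x.1 + y.1 = z.1 + w.1 := congrArg Prod.fst h
      have e2 : x.2 + y.2 = z.2 + w.2 := congrArg Prod.snd h
      rw [hp x hx, hp y hy, hp z hz, hp w hw] at e2
      have e3 : (x.1 + y.1) ⬝ᵥ (x.1 + y.1) = (z.1 + w.1) ⬝ᵥ (z.1 + w.1) := by rw [e1]
      simp only [add_dotProduct, dotProduct_add, dotProduct_comm y.1 x.1,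
        dotProduct_comm w.1 z.1] at e3
      have h2 : (2 : F) ≠ 0 := Ring.two_ne_zero hF
      refine mul_left_cancel₀ h2 ?_
      linear_combination e3 - e2
    · rintro ⟨x, y, z, w⟩ h ⟨x', y', z', w'⟩ h' e
      simp only [Finset.mem_coe, Finset.mem_filter, Finset.mem_product] at h h'
      simp only [Prod.mk.injEq] at e
      obtain ⟨⟨hx, hy, hz, hw⟩, -⟩ := h
      obtain ⟨⟨hx', hy', hz', hw'⟩, -⟩ := h'
      obtain ⟨⟨a, b⟩, c, f⟩ := e
      rw [hfst hx hx' a, hfst hy hy' b, hfst hz hz' c, hfst hw hw' f]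
  have hleR : (lambda4 E : ℝ) ≤ (LL A : ℝ) := by exact_mod_cast hle
  refine hleR.trans ?_
  rw [← hcard]
  refine real_final k (by omega) _ _ _ ?_ ?_ (by positivity) ?_ ?_ ?_
  · exact_mod_cast Fintype.card_pos
  · rw [hcard]; exact_mod_cast hne.card_pos
  · exact_mod_cast LL_trivial A
  · have : #A ≤ Fintype.card F ^ (2 * k + 1) := by
      refine (Finset.card_le_univ _).trans ?_
      simp
    exact_mod_cast this
  · intro h
    have h' : (#A : ℤ) ^ 3 ≤ (Fintype.card F : ℤ) * LL A := by exact_mod_cast h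
    have := main_ineq hF k A h'
    exact_mod_cast this
end
end

section
/- Let d ≥ 4 be even. There exists a constant C = C(d) > 0 such that for every finite field F_q with q elements of characteristic greater than two and every subset E of the paraboloid S ⊂ F_q^d, one has Λ_4(E) ≤ C · min{ |E|^3, q^{−1}|E|^3 + q^{(d−2)/4}|E|^{5/2} + q^{(d−2)/2}|E|^2 }. -/
open Finset

noncomputable section

lemma addChar_sum {F : Type} [Field F] (ψ : AddChar F ℂ) {ι : Type} (s : Finset ι) (f : ι → F) :
    ψ (∑ i ∈ s, f i) = ∏ i ∈ s, ψ (f i) := by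
  classical
  induction s using Finset.induction_on with
  | empty => simp
  | insert a s ha ih => rw [Finset.sum_insert ha, Finset.prod_insert ha, AddChar.map_add_eq_mul, ih]

lemma addChar_sub {F : Type} [Field F] [Finite F] (ψ : AddChar F ℂ) (a b : F) :
    ψ (a - b) = ψ a * (starRingEnd ℂ) (ψ b) := by
  rw [sub_eq_add_neg, AddChar.map_add_eq_mul, AddChar.map_neg_eq_conj]

lemma char_dot_sum {F : Type} [Field F] [Fintype F] [DecidableEq F] {ψ : AddChar F ℂ}
    (hψ : ψ.IsPrimitive) {n : ℕ} (v : Fin n → F) :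
    ∑ m : Fin n → F, ψ (m ⬝ᵥ v) = if v = 0 then (Fintype.card F : ℂ) ^ n else 0 := by
  have h1 : ∀ m : Fin n → F, ψ (m ⬝ᵥ v) = ∏ i, ψ (m i * v i) := by
    intro m
    simp only [dotProduct]
    exact addChar_sum ψ _ _
  simp_rw [h1]
  rw [← Fintype.prod_sum (fun i (x : F) => ψ (x * v i))]
  simp_rw [AddChar.sum_mulShift _ hψ]
  split_ifs with h
  · subst h; simp
  · obtain ⟨i, hi⟩ := Function.ne_iff.1 h
    exact Finset.prod_eq_zero (Finset.mem_univ i) (by simpa using hi)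

def etaC (F : Type) [Field F] [Fintype F] [DecidableEq F] : MulChar F ℂ :=
  (quadraticChar F).ringHomComp (Int.castRingHom ℂ)

lemma etaC_sq {F : Type} [Field F] [Fintype F] [DecidableEq F] {s : F} (hs : s ≠ 0) :
    etaC F s * etaC F s = 1 := by
  have := quadraticChar_sq_one hs
  simp only [etaC, MulChar.ringHomComp_apply]
  rw [← map_mul, ← pow_two, this, map_one]

lemma etaC_ne_one {F : Type} [Field F] [Fintype F] [DecidableEq F] (hF : ringChar F ≠ 2) :
    etaC F ≠ 1 := by
  intro h
  apply quadraticChar_ne_one hF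
  exact MulChar.injective_ringHomComp (Int.castRingHom ℂ).injective_int
    (by change (quadraticChar F).ringHomComp (Int.castRingHom ℂ) = (1 : MulChar F ℤ).ringHomComp (Int.castRingHom ℂ); rw [MulChar.ringHomComp_one]; exact h)

lemma etaC_quad {F : Type} [Field F] [Fintype F] [DecidableEq F] :
    (etaC F).IsQuadratic := (quadraticChar_isQuadratic F).comp _

lemma gauss_norm {F : Type} [Field F] [Fintype F] [DecidableEq F] (hF : ringChar F ≠ 2)
    {ψ : AddChar F ℂ} (hψ : ψ.IsPrimitive) :
    ‖gaussSum (etaC F) ψ‖ ^ 2 = Fintype.card F := by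
  rw [← norm_pow, gaussSum_sq (etaC_ne_one hF) etaC_quad hψ, norm_mul]
  have := etaC_sq (F := F) (s := -1) (by simp)
  rw [← pow_two] at this
  have h2 := congrArg norm this
  rw [norm_pow, norm_one] at h2
  have h3 : ‖etaC F (-1)‖ = 1 := by
    nlinarith [norm_nonneg (etaC F (-1))]
  rw [h3]; simp

lemma gauss_shift {F : Type} [Field F] [Fintype F] [DecidableEq F] 
    (ψ : AddChar F ℂ) {s : F} (hs : s ≠ 0) :
    ∑ y, etaC F y * ψ (s * y) = etaC F s * gaussSum (etaC F) ψ := by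
  have := gaussSum_mulShift (etaC F) ψ (Units.mk0 s hs)
  rw [← this, ← mul_assoc]
  simp only [Units.val_mk0]
  rw [etaC_sq hs, one_mul]
  rfl

lemma quad_sum {F : Type} [Field F] [Fintype F] [DecidableEq F] (hF : ringChar F ≠ 2)
    {ψ : AddChar F ℂ} (hψ : ψ.IsPrimitive) {s : F} (hs : s ≠ 0) :
    ∑ x, ψ (s * x ^ 2) = etaC F s * gaussSum (etaC F) ψ := by
  rw [← gauss_shift ψ hs]
  rw [← Finset.sum_fiberwise (s := univ) (g := fun x : F => x ^ 2)]
  have h1 : ∀ y : F, ∑ x with x ^ 2 = y, ψ (s * x ^ 2) = (etaC F y + 1) * ψ (s * y) := by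
    intro y
    have := quadraticChar_card_sqrts hF y
    rw [Finset.sum_congr rfl (g := fun _ => ψ (s * y))]
    · rw [Finset.sum_const, nsmul_eq_mul]
      congr 1
      simp only [etaC, MulChar.ringHomComp_apply]
      have h2 := congrArg (Int.castRingHom ℂ) this
      simp only [map_add, map_one, map_natCast] at h2
      rw [← h2]
      simp
    · intro x hx
      simp at hx
      rw [hx]
  simp_rw [h1, add_mul, one_mul]
  rw [Finset.sum_add_distrib]
  have h3 := AddChar.sum_mulShift (R' := ℂ) s hψ
  rw [if_neg hs] at h3
  simp_rw [mul_comm _ s] at h3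
  rw [h3]; simp

lemma quad_sum' {F : Type} [Field F] [Fintype F] [DecidableEq F] (hF : ringChar F ≠ 2)
    {ψ : AddChar F ℂ} (hψ : ψ.IsPrimitive) {s : F} (hs : s ≠ 0) (b : F) :
    ∑ x, ψ (s * x ^ 2 + x * b) = etaC F s * gaussSum (etaC F) ψ * ψ (-b ^ 2 / (4 * s)) := by
  rw [← quad_sum hF hψ hs, Finset.sum_mul]
  have h2 : (2 : F) ≠ 0 := Ring.two_ne_zero hF
  have h4 : (4 : F) ≠ 0 := by
    have : (4 : F) = 2 * 2 := by norm_num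
    rw [this]; exact mul_ne_zero h2 h2
  apply Fintype.sum_equiv (Equiv.addRight (b / (2 * s)))
  intro x
  rw [← AddChar.map_add_eq_mul]
  congr 1
  simp only [Equiv.coe_addRight]
  field_simp
  ring

lemma quad_sum_vec {F : Type} [Field F] [Fintype F] [DecidableEq F] (hF : ringChar F ≠ 2)
    {ψ : AddChar F ℂ} (hψ : ψ.IsPrimitive) {s : F} (hs : s ≠ 0) {n : ℕ} (v : Fin n → F) :
    ∑ m : Fin n → F, ψ (s * (m ⬝ᵥ m) + m ⬝ᵥ v) =
      (etaC F s * gaussSum (etaC F) ψ) ^ n * ψ (-(v ⬝ᵥ v) / (4 * s)) := by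
  have h1 : ∀ m : Fin n → F, ψ (s * (m ⬝ᵥ m) + m ⬝ᵥ v) = ∏ i, ψ (s * m i ^ 2 + m i * v i) := by
    intro m
    rw [← addChar_sum]
    congr 1
    simp only [dotProduct, Finset.mul_sum, Finset.sum_add_distrib, pow_two]
  simp_rw [h1]
  rw [← Fintype.prod_sum (fun i (x : F) => ψ (s * x ^ 2 + x * v i))]
  simp_rw [quad_sum' hF hψ hs]
  rw [Finset.prod_mul_distrib, ← addChar_sum]
  congr 1
  · simp
  · congr 1
    simp only [dotProduct, ← Finset.sum_neg_distrib, Finset.sum_div, pow_two]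

/-- kernel -/
def hker {F : Type} [Field F] [Fintype F] [DecidableEq F] (ψ : AddChar F ℂ) (a : F) : ℂ :=
  ∑ s, etaC F s * ψ (s * a)

lemma hker_norm {F : Type} [Field F] [Fintype F] [DecidableEq F] (hF : ringChar F ≠ 2)
    {ψ : AddChar F ℂ} (hψ : ψ.IsPrimitive) (a : F) :
    ‖hker ψ a‖ ≤ Real.sqrt (Fintype.card F) := by
  by_cases ha : a = 0
  · have : hker ψ a = 0 := by
      simp only [hker, ha, mul_zero, AddChar.map_zero_eq_one, mul_one]
      exact MulChar.sum_eq_zero_of_ne_one (etaC_ne_one hF)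
    rw [this]; simp
  · have : hker ψ a = etaC F a * gaussSum (etaC F) ψ := by
      rw [← gauss_shift ψ ha]; simp only [hker, mul_comm]
    rw [this, norm_mul]
    have h2 := congrArg norm (etaC_sq (F := F) ha)
    rw [norm_mul, norm_one] at h2
    have h3 : ‖etaC F a‖ = 1 := by
      nlinarith [norm_nonneg (etaC F a)]
    rw [h3, one_mul]
    exact Real.le_sqrt_of_sq_le (gauss_norm hF hψ).le

lemma hker_fourier {F : Type} [Field F] [Fintype F] [DecidableEq F] (hF : ringChar F ≠ 2)
    {ψ : AddChar F ℂ} (hψ : ψ.IsPrimitive) {n k : ℕ} (hn : n = 2 * k + 1) (v : Fin n → F) :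
    ∑ m : Fin n → F, hker ψ (m ⬝ᵥ m) * ψ (m ⬝ᵥ v) =
      gaussSum (etaC F) ψ ^ n * ((if v ⬝ᵥ v = 0 then (Fintype.card F : ℂ) else 0) - 1) := by
  simp only [hker, Finset.sum_mul]
  rw [Finset.sum_comm]
  have h2 : (2 : F) ≠ 0 := Ring.two_ne_zero hF
  have h4 : (4 : F) ≠ 0 := by
    have : (4 : F) = 2 * 2 := by norm_num
    rw [this]; exact mul_ne_zero h2 h2
  have h1 : ∀ s : F, ∑ m : Fin n → F, etaC F s * ψ (s * (m ⬝ᵥ m)) * ψ (m ⬝ᵥ v) =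
      gaussSum (etaC F) ψ ^ n * (ψ (s⁻¹ * (-(v ⬝ᵥ v) / 4)) - if s = 0 then 1 else 0) := by
    intro s
    by_cases hs : s = 0
    · subst hs; simp [MulChar.map_zero]
    · simp_rw [mul_assoc, ← AddChar.map_add_eq_mul]
      rw [← Finset.mul_sum, quad_sum_vec hF hψ hs, if_neg hs, sub_zero, mul_pow]
      have : etaC F s * etaC F s ^ n = 1 := by
        rw [hn, pow_succ, pow_mul, pow_two, etaC_sq hs, one_pow, one_mul, etaC_sq hs]
      rw [← mul_assoc, ← mul_assoc, this, one_mul]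
      congr 2
      field_simp
  simp_rw [h1]
  rw [← Finset.mul_sum, Finset.sum_sub_distrib]
  congr 1
  congr 1
  · rw [Fintype.sum_equiv (Equiv.inv F) _ (fun s => ψ (s * (-(v ⬝ᵥ v) / 4))) (fun s => by simp)]
    rw [AddChar.sum_mulShift _ hψ]
    simp [h4]
  · simp

lemma exists_prim (F : Type) [Field F] [Fintype F] : ∃ ψ : AddChar F ℂ, ψ.IsPrimitive := by
  obtain ⟨ψ, hψ⟩ := AddChar.exists_apply_ne_zero.2 (one_ne_zero : (1 : F) ≠ 0)
  exact ⟨ψ, AddChar.IsPrimitive.of_ne_one (by rintro rfl; simp at hψ)⟩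

lemma parseval {F : Type} [Field F] [Fintype F] [DecidableEq F] {ψ : AddChar F ℂ}
    (hψ : ψ.IsPrimitive) {n : ℕ} (A : Finset (Fin n → F)) :
    ∑ m : Fin n → F, ‖∑ x ∈ A, ψ (m ⬝ᵥ x)‖ ^ 2 = (Fintype.card F : ℝ) ^ n * #A := by
  have h : ∀ m : Fin n → F, ((‖∑ x ∈ A, ψ (m ⬝ᵥ x)‖ ^ 2 : ℝ) : ℂ) =
      ∑ x ∈ A, ∑ y ∈ A, ψ (m ⬝ᵥ (x - y)) := by
    intro m
    push_cast
    rw [← Complex.mul_conj', map_sum, Finset.sum_mul_sum]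
    simp_rw [dotProduct_sub, addChar_sub]
  have : ((∑ m : Fin n → F, ‖∑ x ∈ A, ψ (m ⬝ᵥ x)‖ ^ 2 : ℝ) : ℂ) =
      ((Fintype.card F : ℝ) ^ n * #A : ℝ) := by
    rw [Complex.ofReal_sum]
    simp_rw [h]
    rw [Finset.sum_comm]
    simp_rw [Finset.sum_comm (s := univ), char_dot_sum hψ, sub_eq_zero]
    simp [mul_comm]
  exact_mod_cast this

lemma iso_pairs {F : Type} [Field F] [Fintype F] [DecidableEq F] (hF : ringChar F ≠ 2)
    {n k : ℕ} (hn : n = 2 * k + 1) (A : Finset (Fin n → F)) :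
    (∑ x ∈ A, ∑ y ∈ A, if (x - y) ⬝ᵥ (x - y) = 0 then (1 : ℝ) else 0) ≤
      (#A : ℝ) ^ 2 / Fintype.card F + (Fintype.card F : ℝ) ^ k * #A := by
  obtain ⟨ψ, hψ⟩ := exists_prim F
  set q : ℝ := (Fintype.card F : ℝ) with hq
  have hq0 : 0 < q := by rw [hq]; exact_mod_cast Fintype.card_pos
  set D : ℝ := ∑ x ∈ A, ∑ y ∈ A, if (x - y) ⬝ᵥ (x - y) = 0 then (1 : ℝ) else 0 with hD
  set G := gaussSum (etaC F) ψ
  have key : G ^ n * ((q * D - (#A : ℝ) ^ 2 : ℝ) : ℂ) =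
      ∑ m : Fin n → F, hker ψ (m ⬝ᵥ m) * ((‖∑ x ∈ A, ψ (m ⬝ᵥ x)‖ ^ 2 : ℝ) : ℂ) := by
    have h : ∀ m : Fin n → F, ((‖∑ x ∈ A, ψ (m ⬝ᵥ x)‖ ^ 2 : ℝ) : ℂ) =
        ∑ x ∈ A, ∑ y ∈ A, ψ (m ⬝ᵥ (x - y)) := by
      intro m
      push_cast
      rw [← Complex.mul_conj', map_sum, Finset.sum_mul_sum]
      simp_rw [dotProduct_sub, addChar_sub]
    simp_rw [h, Finset.mul_sum]
    rw [Finset.sum_comm]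
    simp_rw [Finset.sum_comm (s := univ), hker_fourier hF hψ hn]
    simp_rw [← Finset.mul_sum]
    congr 1
    simp_rw [Finset.sum_sub_distrib]
    rw [hD, hq]
    push_cast
    simp only [Finset.mul_sum, Finset.sum_const, nsmul_eq_mul]
    congr 1
    · refine Finset.sum_congr rfl fun x _ => Finset.sum_congr rfl fun y _ => ?_
      split_ifs <;> simp
    · ring
  have h1 := congrArg norm key
  rw [norm_mul, norm_pow, Complex.norm_real] at h1
  have h2 : ‖∑ m : Fin n → F, hker ψ (m ⬝ᵥ m) * ((‖∑ x ∈ A, ψ (m ⬝ᵥ x)‖ ^ 2 : ℝ) : ℂ)‖ ≤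
      Real.sqrt q * (q ^ n * #A) := by
    rw [← parseval hψ, Finset.mul_sum]
    refine (norm_sum_le _ _).trans (Finset.sum_le_sum fun m _ => ?_)
    rw [norm_mul, Complex.norm_real, Real.norm_of_nonneg (by positivity)]
    exact mul_le_mul_of_nonneg_right (hker_norm hF hψ _) (by positivity)
  have hG : ‖G‖ = Real.sqrt q := by
    rw [eq_comm, Real.sqrt_eq_iff_mul_self_eq hq0.le (norm_nonneg _), ← pow_two]
    exact (gauss_norm hF hψ).symm
  rw [← h1, hG] at h2
  have hs : Real.sqrt q * Real.sqrt q = q := Real.mul_self_sqrt hq0.le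
  have hs0 : 0 < Real.sqrt q := Real.sqrt_pos.2 hq0
  have e1 : Real.sqrt q ^ n = Real.sqrt q * q ^ k := by
    rw [hn, pow_succ, pow_mul, pow_two, hs, mul_comm]
  have e2 : q ^ n = q ^ k * (q * q ^ k) := by rw [hn]; ring
  rw [e1, e2] at h2
  have h3 : (q * D - (#A : ℝ) ^ 2) ≤ q * q ^ k * #A := by
    refine (Real.le_norm_self _).trans ?_
    have : 0 < Real.sqrt q * q ^ k := by positivity
    refine le_of_mul_le_mul_left ?_ this
    calc _ ≤ _ := h2
      _ = _ := by ring
  rw [div_add' _ _ _ hq0.ne', le_div_iff₀ hq0]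
  nlinarith

lemma ind_char {F : Type} [Field F] [Fintype F] [DecidableEq F] {ψ : AddChar F ℂ}
    (hψ : ψ.IsPrimitive) (t : F) :
    (Fintype.card F : ℂ) * (if t = 0 then 1 else 0) = ∑ s, ψ (s * t) := by
  rw [AddChar.sum_mulShift _ hψ]; split_ifs <;> simp

lemma count_one {F : Type} [Field F] [Fintype F] [DecidableEq F] {n : ℕ} {p : Fin n → F}
    (hp : p ≠ 0) (a : F) :
    (Fintype.card F : ℝ) * ∑ y : Fin n → F, (if y ⬝ᵥ p - a = 0 then (1 : ℝ) else 0) =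
      (Fintype.card F : ℝ) ^ n := by
  obtain ⟨ψ, hψ⟩ := exists_prim F
  have : (Fintype.card F : ℂ) * ∑ y : Fin n → F, (if y ⬝ᵥ p - a = 0 then (1 : ℂ) else 0) =
      (Fintype.card F : ℂ) ^ n := by
    rw [Finset.mul_sum]
    simp_rw [ind_char hψ]
    rw [Finset.sum_comm]
    have h : ∀ s : F, ∑ y : Fin n → F, ψ (s * (y ⬝ᵥ p - a)) =
        if s = 0 then (Fintype.card F : ℂ) ^ n else 0 := by
      intro s
      have h1 : ∀ y : Fin n → F, ψ (s * (y ⬝ᵥ p - a)) = ψ (-(s * a)) * ψ (y ⬝ᵥ (s • p)) := by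
        intro y
        rw [← AddChar.map_add_eq_mul, dotProduct_smul, smul_eq_mul]
        congr 1; ring
      simp_rw [h1]
      rw [← Finset.mul_sum, char_dot_sum hψ]
      by_cases hs : s = 0
      · simp [hs]
      · simp [hs, hp]
    simp_rw [h]
    simp
  exact_mod_cast this

lemma count_two {F : Type} [Field F] [Fintype F] [DecidableEq F] {n : ℕ} {p p' : Fin n → F}
    (hp : ∀ s t : F, s • p + t • p' = 0 → s = 0 ∧ t = 0) (a b : F) :
    (Fintype.card F : ℝ) ^ 2 * ∑ y : Fin n → F,
      ((if y ⬝ᵥ p - a = 0 then (1 : ℝ) else 0) * (if y ⬝ᵥ p' - b = 0 then (1 : ℝ) else 0)) =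
      (Fintype.card F : ℝ) ^ n := by
  obtain ⟨ψ, hψ⟩ := exists_prim F
  have : (Fintype.card F : ℂ) ^ 2 * ∑ y : Fin n → F,
      ((if y ⬝ᵥ p - a = 0 then (1 : ℂ) else 0) * (if y ⬝ᵥ p' - b = 0 then (1 : ℂ) else 0)) =
      (Fintype.card F : ℂ) ^ n := by
    rw [Finset.mul_sum]
    have h0 : ∀ y : Fin n → F, (Fintype.card F : ℂ) ^ 2 *
      ((if y ⬝ᵥ p - a = 0 then (1 : ℂ) else 0) * (if y ⬝ᵥ p' - b = 0 then (1 : ℂ) else 0)) =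
      ∑ s, ∑ t, ψ (s * (y ⬝ᵥ p - a)) * ψ (t * (y ⬝ᵥ p' - b)) := by
      intro y
      rw [← Finset.sum_mul_sum, ← ind_char hψ, ← ind_char hψ]
      ring
    simp_rw [h0]
    rw [Finset.sum_comm]
    simp_rw [Finset.sum_comm (s := (univ : Finset (Fin n → F)))]
    have h : ∀ s t : F, ∑ y : Fin n → F, ψ (s * (y ⬝ᵥ p - a)) * ψ (t * (y ⬝ᵥ p' - b)) =
        if s = 0 then (if t = 0 then (Fintype.card F : ℂ) ^ n else 0) else 0 := by
      intro s t
      have h1 : ∀ y : Fin n → F, ψ (s * (y ⬝ᵥ p - a)) * ψ (t * (y ⬝ᵥ p' - b)) =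
          ψ (-(s * a) - t * b) * ψ (y ⬝ᵥ (s • p + t • p')) := by
        intro y
        rw [← AddChar.map_add_eq_mul, ← AddChar.map_add_eq_mul, dotProduct_add, dotProduct_smul,
          dotProduct_smul, smul_eq_mul, smul_eq_mul]
        congr 1; ring
      simp_rw [h1]
      rw [← Finset.mul_sum, char_dot_sum hψ]
      by_cases hs : s = 0
      · by_cases ht : t = 0
        · simp [hs, ht]
        · rw [if_neg, if_pos hs, if_neg ht, mul_zero]
          intro h; exact ht (hp s t h).2
      · rw [if_neg, if_neg hs, mul_zero]
        intro h; exact hs (hp s t h).1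
    simp_rw [h]
    simp
  exact_mod_cast this

/-- incidence bound for hyperplanes attached to anisotropic vectors -/
lemma hyper_bound {F : Type} [Field F] [Fintype F] [DecidableEq F] {n k : ℕ} (hn : n = 2 * k + 1)
    (Z Y : Finset (Fin n → F)) (a : ℝ) (hZ : ∀ p ∈ Z, p ⬝ᵥ p ≠ 0) (hZa : (#Z : ℝ) ≤ a)
    (hYa : (#Y : ℝ) ≤ a) :
    (∑ y ∈ Y, ∑ p ∈ Z, if y ⬝ᵥ p - p ⬝ᵥ p = 0 then (1 : ℝ) else 0) ≤
      a ^ 2 / Fintype.card F + (Fintype.card F : ℝ) ^ k * a := by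
  set q : ℝ := (Fintype.card F : ℝ) with hq
  have hq0 : 0 < q := by rw [hq]; exact_mod_cast Fintype.card_pos
  set f : (Fin n → F) → (Fin n → F) → ℝ :=
    fun y p => if y ⬝ᵥ p - p ⬝ᵥ p = 0 then (1 : ℝ) else 0 with hf
  change (∑ y ∈ Y, ∑ p ∈ Z, f y p) ≤ _
  have ha : 0 ≤ a := le_trans (by positivity) hZa
  have hp0 : ∀ p ∈ Z, p ≠ 0 := by
    rintro p hp rfl
    exact hZ _ hp (by simp)
  have pair : ∀ p ∈ Z, ∀ p' ∈ Z, ∑ y, (q * f y p - 1) * (q * f y p' - 1) ≤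
      if p = p' then q * q ^ n else 0 := by
    intro p hp p' hp'
    have e : ∑ y, (q * f y p - 1) * (q * f y p' - 1) =
        q ^ 2 * ∑ y, f y p * f y p' - q * ∑ y, f y p - q * ∑ y, f y p' + q ^ n := by
      have : ∀ y, (q * f y p - 1) * (q * f y p' - 1) =
        q ^ 2 * (f y p * f y p') - q * f y p - q * f y p' + 1 := by intro y; ring
      simp_rw [this]
      rw [Finset.sum_add_distrib, Finset.sum_sub_distrib, Finset.sum_sub_distrib,
        ← Finset.mul_sum, ← Finset.mul_sum, ← Finset.mul_sum]
      congr 1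
      simp [hq]
    have c1 : q * ∑ y, f y p = q ^ n := count_one (hp0 p hp) _
    have c2 : q * ∑ y, f y p' = q ^ n := count_one (hp0 p' hp') _
    rw [e, c1, c2]
    have hqn : 0 < q ^ n := by positivity
    split_ifs with h
    · subst h
      have : ∀ y, f y p * f y p = f y p := by intro y; simp only [hf]; split_ifs <;> simp
      simp_rw [this]
      rw [pow_two, mul_assoc, c1]
      linarith
    · by_cases hl : ∃ c : F, p' = c • p
      · obtain ⟨c, hc⟩ := hl
        have : ∀ y, f y p * f y p' = 0 := by
          intro y
          simp only [hf]
          by_cases h1 : y ⬝ᵥ p - p ⬝ᵥ p = 0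
          · rw [if_neg (c := y ⬝ᵥ p' - p' ⬝ᵥ p' = 0), mul_zero]
            intro h2
            rw [hc] at h2
            simp only [dotProduct_smul, smul_dotProduct, smul_eq_mul] at h2
            rw [sub_eq_zero] at h1
            rw [h1] at h2
            have h3 : c * (1 - c) * (p ⬝ᵥ p) = 0 := by rw [← h2]; ring
            rcases mul_eq_zero.1 h3 with h3 | h3
            · rcases mul_eq_zero.1 h3 with h3 | h3
              · exact hp0 p' hp' (by rw [hc, h3, zero_smul])
              · exact h (by rw [hc, ← sub_eq_zero.1 h3, one_smul])
            · exact hZ p hp h3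
          · rw [if_neg h1, zero_mul]
        simp_rw [this]
        simp
        linarith
      · have : q ^ 2 * ∑ y, f y p * f y p' = q ^ n := by
          refine count_two ?_ _ _
          intro s t hst
          have ht : t = 0 := by
            by_contra ht
            apply hl
            refine ⟨-(t⁻¹ * s), ?_⟩
            have : t • p' = -(s • p) := by rw [eq_neg_iff_add_eq_zero, add_comm]; exact hst
            rw [neg_smul, mul_smul, ← smul_neg, ← this, smul_smul, inv_mul_cancel₀ ht, one_smul]
          refine ⟨?_, ht⟩
          rw [ht, zero_smul, add_zero] at hst
          exact (smul_eq_zero.1 hst).resolve_right (hp0 p hp)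
        rw [this]; linarith
  have var : ∑ y, (∑ p ∈ Z, (q * f y p - 1)) ^ 2 ≤ #Z * (q * q ^ n) := by
    simp_rw [pow_two, Finset.sum_mul_sum]
    rw [Finset.sum_comm]
    simp_rw [Finset.sum_comm (s := (univ : Finset (Fin n → F)))]
    calc _ ≤ ∑ p ∈ Z, ∑ p' ∈ Z, (if p = p' then q * q ^ n else 0) :=
          Finset.sum_le_sum fun p hp => Finset.sum_le_sum fun p' hp' => pair p hp p' hp'
      _ = _ := by simp
  have cs : (∑ y ∈ Y, ∑ p ∈ Z, (q * f y p - 1)) ^ 2 ≤ (a * (q * q ^ k)) ^ 2 := by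
    calc _ ≤ (#Y : ℝ) * ∑ y ∈ Y, (∑ p ∈ Z, (q * f y p - 1)) ^ 2 := sq_sum_le_card_mul_sum_sq
      _ ≤ (#Y : ℝ) * ∑ y, (∑ p ∈ Z, (q * f y p - 1)) ^ 2 := by
          gcongr
          exact Finset.subset_univ _
      _ ≤ #Y * (#Z * (q * q ^ n)) := by gcongr
      _ ≤ a * (a * (q * q ^ n)) := by gcongr
      _ = _ := by rw [hn]; ring
  have h1 := abs_le_of_sq_le_sq cs (by positivity)
  have h2 := (abs_le.1 h1).2
  have e : ∑ y ∈ Y, ∑ p ∈ Z, (q * f y p - 1) = q * (∑ y ∈ Y, ∑ p ∈ Z, f y p) - #Y * #Z := by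
    simp_rw [Finset.sum_sub_distrib, ← Finset.mul_sum]
    simp
  rw [e] at h2
  have h3 : (#Y : ℝ) * #Z ≤ a * a := by gcongr
  rw [div_add' _ _ _ hq0.ne', le_div_iff₀ hq0]
  nlinarith

lemma triangle_bound {α : Type} (A : Finset α) (f : α → α → ℝ) (hf : ∀ x y, f x y = 0 ∨ f x y = 1) :
    (∑ x ∈ A, ∑ y ∈ A, ∑ z ∈ A, f x y * (f y z * f x z)) ^ 2 ≤
      (∑ x ∈ A, ∑ y ∈ A, f x y) ^ 3 := by
  have h0 : ∀ x y, 0 ≤ f x y := fun x y => by rcases hf x y with h | h <;> rw [h] <;> norm_num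
  have h1 : ∀ x y, f x y ≤ 1 := fun x y => by rcases hf x y with h | h <;> rw [h] <;> norm_num
  have h2 : ∀ x y, f x y ^ 2 = f x y := fun x y => by
    rcases hf x y with h | h <;> rw [h] <;> norm_num
  simp_rw [← Finset.mul_sum]
  rw [← Finset.sum_product' A A (fun x y => f x y * ∑ z ∈ A, f y z * f x z)]
  refine (Finset.sum_mul_sq_le_sq_mul_sq _ _ _).trans ?_
  simp_rw [h2]
  rw [Finset.sum_product' A A (fun x y => f x y)]
  rw [pow_succ' _ 2]
  refine mul_le_mul_of_nonneg_left ?_ (Finset.sum_nonneg fun _ _ => Finset.sum_nonneg fun _ _ => h0 _ _)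
  rw [Finset.sum_product' A A (fun x y => (∑ z ∈ A, f y z * f x z) ^ 2)]
  have : ∀ x y, (∑ z ∈ A, f y z * f x z) ^ 2 ≤ (∑ z ∈ A, f y z) * (∑ z ∈ A, f x z) := by
    intro x y
    rw [pow_two]
    apply mul_le_mul
    · exact Finset.sum_le_sum fun z _ => mul_le_of_le_one_right (h0 _ _) (h1 _ _)
    · exact Finset.sum_le_sum fun z _ => mul_le_of_le_one_left (h0 _ _) (h1 _ _)
    · exact Finset.sum_nonneg fun _ _ => mul_nonneg (h0 _ _) (h0 _ _)
    · exact Finset.sum_nonneg fun _ _ => h0 _ _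
  refine (Finset.sum_le_sum fun x _ => Finset.sum_le_sum fun y _ => this x y).trans ?_
  rw [pow_two, Finset.sum_mul_sum, Finset.sum_comm]

lemma corner_bound {F : Type} [Field F] [Fintype F] [DecidableEq F] {n k : ℕ} (hn : n = 2 * k + 1)
    (A : Finset (Fin n → F)) (x : Fin n → F) :
    (∑ y ∈ A, ∑ z ∈ A,
      if (z - x) ⬝ᵥ (z - x) ≠ 0 ∧ (z - x) ⬝ᵥ (z - y) = 0 then (1 : ℝ) else 0) ≤
      (#A : ℝ) ^ 2 / Fintype.card F + (Fintype.card F : ℝ) ^ k * #A := by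
  have inj : Function.Injective (fun z : Fin n → F => z - x) := sub_left_injective
  have := hyper_bound hn ((A.filter fun z => (z - x) ⬝ᵥ (z - x) ≠ 0).image (fun z => z - x))
    (A.image (fun z => z - x)) (#A : ℝ) (by
      intro p hp
      simp only [Finset.mem_image, Finset.mem_filter] at hp
      obtain ⟨z, hz, rfl⟩ := hp
      exact hz.2) (by
      exact_mod_cast Finset.card_image_le.trans (Finset.card_filter_le _ _)) (by
      exact_mod_cast Finset.card_image_le)
  refine le_trans (le_of_eq ?_) this
  rw [Finset.sum_image (fun _ _ _ _ h => inj h)]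
  refine Finset.sum_congr rfl fun y _ => ?_
  rw [Finset.sum_image (fun _ _ _ _ h => inj h), Finset.sum_filter]
  refine Finset.sum_congr rfl fun z _ => ?_
  rw [ite_and]
  have e : (y - x) ⬝ᵥ (z - x) - (z - x) ⬝ᵥ (z - x) = - ((z - x) ⬝ᵥ (z - y)) := by
    rw [← sub_dotProduct, dotProduct_comm, ← dotProduct_neg]
    congr 1; abel
  rw [e]; simp only [neg_eq_zero]

lemma right_angles {F : Type} [Field F] [Fintype F] [DecidableEq F] (hF : ringChar F ≠ 2)
    {n k : ℕ} (hn : n = 2 * k + 1) (A : Finset (Fin n → F)) :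
    ∃ D T0 : ℝ, 0 ≤ T0 ∧ 0 ≤ D ∧ T0 ^ 2 ≤ D ^ 3 ∧
      D ≤ (#A : ℝ) ^ 2 / Fintype.card F + (Fintype.card F : ℝ) ^ k * #A ∧
      (∑ x ∈ A, ∑ y ∈ A, ∑ z ∈ A, if (z - x) ⬝ᵥ (z - y) = 0 then (1 : ℝ) else 0) ≤
      2 * (#A * ((#A : ℝ) ^ 2 / Fintype.card F + (Fintype.card F : ℝ) ^ k * #A)) + T0 := by
  set f : (Fin n → F) → (Fin n → F) → ℝ :=
    fun x y => if (x - y) ⬝ᵥ (x - y) = 0 then (1 : ℝ) else 0 with hf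
  have hf0 : ∀ x y, 0 ≤ f x y := fun x y => by simp only [hf]; split_ifs <;> norm_num
  refine ⟨∑ x ∈ A, ∑ y ∈ A, f x y, ∑ x ∈ A, ∑ y ∈ A, ∑ z ∈ A, f x y * (f y z * f x z),
    Finset.sum_nonneg fun _ _ => Finset.sum_nonneg fun _ _ => Finset.sum_nonneg fun _ _ =>
      mul_nonneg (hf0 _ _) (mul_nonneg (hf0 _ _) (hf0 _ _)),
    Finset.sum_nonneg fun _ _ => Finset.sum_nonneg fun _ _ => hf0 _ _,
    triangle_bound A f (fun x y => by simp only [hf]; split_ifs <;> simp), iso_pairs hF hn A, ?_⟩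
  have pt : ∀ x y z : Fin n → F, (if (z - x) ⬝ᵥ (z - y) = 0 then (1 : ℝ) else 0) ≤
      (if (z - x) ⬝ᵥ (z - x) ≠ 0 ∧ (z - x) ⬝ᵥ (z - y) = 0 then (1 : ℝ) else 0) +
      (if (z - y) ⬝ᵥ (z - y) ≠ 0 ∧ (z - y) ⬝ᵥ (z - x) = 0 then (1 : ℝ) else 0) +
      f x y * (f y z * f x z) := by
    intro x y z
    have hf3 : 0 ≤ f x y * (f y z * f x z) := mul_nonneg (hf0 _ _) (mul_nonneg (hf0 _ _) (hf0 _ _))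
    by_cases h : (z - x) ⬝ᵥ (z - y) = 0
    · have h' : (z - y) ⬝ᵥ (z - x) = 0 := by rw [dotProduct_comm]; exact h
      by_cases h1 : (z - x) ⬝ᵥ (z - x) = 0
      · by_cases h2 : (z - y) ⬝ᵥ (z - y) = 0
        · have e1 : f x z = 1 := by
            simp only [hf]
            rw [if_pos]
            rw [← neg_sub z x, neg_dotProduct_neg]; exact h1
          have e2 : f y z = 1 := by
            simp only [hf]
            rw [if_pos]
            rw [← neg_sub z y, neg_dotProduct_neg]; exact h2
          have e3 : f x y = 1 := by
            simp only [hf]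
            rw [if_pos]
            have : x - y = (z - y) - (z - x) := by abel
            rw [this, sub_dotProduct, dotProduct_sub (z - y), dotProduct_sub (z - x) (z - y), h, h', h1, h2]; simp
          rw [e1, e2, e3, if_pos h, if_neg (fun hh => hh.1 h1), if_neg (fun hh => hh.1 h2)]
          norm_num
        · rw [if_pos h, if_neg (fun hh => hh.1 h1), if_pos ⟨h2, h'⟩]; linarith
      · rw [if_pos h, if_pos ⟨h1, h⟩]
        split_ifs <;> linarith
    · rw [if_neg h]
      have : ∀ p : Prop, ∀ [Decidable p], (0 : ℝ) ≤ if p then 1 else 0 := by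
        intro p _; split_ifs <;> norm_num
      exact add_nonneg (add_nonneg (this _) (this _)) hf3
  refine (Finset.sum_le_sum fun x _ => Finset.sum_le_sum fun y _ => Finset.sum_le_sum fun z _ =>
    pt x y z).trans ?_
  simp_rw [Finset.sum_add_distrib]
  have b1 := Finset.sum_le_sum (s := A) fun x _ => corner_bound hn A x
  have b2 := b1
  rw [Finset.sum_comm] at b2
  rw [Finset.sum_const, nsmul_eq_mul] at b1 b2
  linarith

lemma lambda4_le {F : Type} [Field F] [Fintype F] [DecidableEq F] (hF : ringChar F ≠ 2) {d : ℕ}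
    (E : Finset ((Fin (d - 1) → F) × F)) (hE : E ⊆ parab F d) :
    ∃ A : Finset (Fin (d - 1) → F), #A = #E ∧ (lambda4 E : ℝ) ≤
      ∑ x ∈ A, ∑ y ∈ A, ∑ z ∈ A, if (z - x) ⬝ᵥ (z - y) = 0 then (1 : ℝ) else 0 := by
  have hE' : ∀ x ∈ E, x.2 = x.1 ⬝ᵥ x.1 := by
    intro x hx
    have := hE hx
    simp only [parab, Finset.mem_filter, Finset.mem_univ, true_and] at this
    exact this
  have inj : Set.InjOn Prod.fst (E : Set ((Fin (d - 1) → F) × F)) := by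
    intro x hx y hy h
    refine Prod.ext h ?_
    rw [hE' x hx, hE' y hy, h]
  have h2 : (2 : F) ≠ 0 := Ring.two_ne_zero hF
  refine ⟨E.image Prod.fst, Finset.card_image_of_injOn inj, ?_⟩
  set A := E.image Prod.fst
  have : (∑ x ∈ A, ∑ y ∈ A, ∑ z ∈ A, if (z - x) ⬝ᵥ (z - y) = 0 then (1 : ℝ) else 0) =
      ((#((A ×ˢ A ×ˢ A).filter fun t => (t.2.2 - t.1) ⬝ᵥ (t.2.2 - t.2.1) = 0) : ℕ) : ℝ) := by
    rw [Finset.card_filter]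
    push_cast
    rw [Finset.sum_product]
    refine Finset.sum_congr rfl fun x _ => ?_
    rw [Finset.sum_product]
  rw [this, Nat.cast_le, lambda4]
  apply Finset.card_le_card_of_injOn (fun t => (t.1.1, t.2.1.1, t.2.2.1.1))
  · rintro ⟨x, y, z, w⟩ ht
    simp only [Finset.coe_filter, Finset.mem_product, Set.mem_ofPred_eq] at ht ⊢
    obtain ⟨⟨hx, hy, hz, hw⟩, h⟩ := ht
    refine ⟨⟨Finset.mem_image_of_mem _ hx, Finset.mem_image_of_mem _ hy,
      Finset.mem_image_of_mem _ hz⟩, ?_⟩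
    have e1 : x.1 + y.1 = z.1 + w.1 := congrArg Prod.fst h
    have e2 : x.2 + y.2 = z.2 + w.2 := congrArg Prod.snd h
    rw [hE' x hx, hE' y hy, hE' z hz, hE' w hw] at e2
    have e3 : w.1 = x.1 + y.1 - z.1 := by rw [e1]; abel
    rw [e3] at e2
    simp only [dotProduct_add, add_dotProduct, dotProduct_sub, sub_dotProduct] at e2 ⊢
    rw [dotProduct_comm y.1 x.1, dotProduct_comm z.1 x.1, dotProduct_comm z.1 y.1] at e2
    rw [dotProduct_comm z.1 y.1]
    refine (mul_eq_zero.1 (?_ : (2 : F) * _ = 0)).resolve_left h2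
    linear_combination -e2
  · rintro ⟨x, y, z, w⟩ ht ⟨x', y', z', w'⟩ ht' h
    simp only [Finset.coe_filter, Finset.mem_product, Set.mem_ofPred_eq] at ht ht'
    obtain ⟨⟨hx, hy, hz, hw⟩, h1⟩ := ht
    obtain ⟨⟨hx', hy', hz', hw'⟩, h1'⟩ := ht'
    simp only [Prod.mk.injEq] at h
    have ex := inj hx hx' h.1
    have ey := inj hy hy' h.2.1
    have ez := inj hz hz' h.2.2
    subst ex ey ez
    rw [h1] at h1'
    rw [add_left_cancel h1']

lemma final_arith (a q Q D T0 T : ℝ) (ha : 0 ≤ a) (hq : 1 ≤ q) (hQ : 0 ≤ Q) (hT0 : 0 ≤ T0)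
    (hD0 : 0 ≤ D)
    (h1 : T0 ^ 2 ≤ D ^ 3) (h2 : D ≤ a ^ 2 / q + Q * a)
    (h3 : T ≤ 2 * (a * (a ^ 2 / q + Q * a)) + T0) (h4 : T ≤ a ^ 3) :
    T ≤ 4 * min (a ^ 3) (q⁻¹ * a ^ 3 + √Q * (a ^ 2 * √a) + Q * a ^ 2) := by
  have hqi : 0 ≤ q⁻¹ := by positivity
  rw [mul_min_of_nonneg _ _ (by norm_num)]
  refine le_min (by nlinarith [pow_nonneg ha 3]) ?_
  have p1 : 0 ≤ q⁻¹ * a ^ 3 := by positivity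
  have p2 : 0 ≤ √Q * (a ^ 2 * √a) := by positivity
  have p3 : 0 ≤ Q * a ^ 2 := by positivity
  by_cases hc : a ≤ Q
  · have : a ^ 3 ≤ Q * a ^ 2 := by
      rw [pow_succ' a 2]; exact mul_le_mul_of_nonneg_right hc (by positivity)
    linarith
  · push Not at hc
    set u := q⁻¹ * a ^ 2 with hu
    set v := Q * a with hv
    have hu0 : 0 ≤ u := by positivity
    have hv0 : 0 ≤ v := by positivity
    have h2' : D ≤ u + v := by rw [hu, inv_mul_eq_div]; exact h2
    have h5 : D ^ 3 ≤ 4 * (u ^ 3 + v ^ 3) := by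
      calc D ^ 3 ≤ (u + v) ^ 3 := by gcongr
        _ ≤ _ := by nlinarith [mul_nonneg (add_nonneg hu0 hv0) (sq_nonneg (u - v))]
    have h6 : u ^ 3 ≤ (q⁻¹ * a ^ 3) ^ 2 := by
      have : q⁻¹ ≤ 1 := inv_le_one_of_one_le₀ hq
      calc u ^ 3 = q⁻¹ * (q⁻¹ * a ^ 3) ^ 2 := by rw [hu]; ring
        _ ≤ 1 * (q⁻¹ * a ^ 3) ^ 2 := by gcongr
        _ = _ := one_mul _
    have h7 : v ^ 3 ≤ (√Q * (a ^ 2 * √a)) ^ 2 := by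
      have e : (√Q * (a ^ 2 * √a)) ^ 2 = Q * a ^ 5 := by
        rw [mul_pow, mul_pow, Real.sq_sqrt hQ, Real.sq_sqrt ha]; ring
      rw [e]
      calc v ^ 3 = Q * a ^ 3 * Q ^ 2 := by rw [hv]; ring
        _ ≤ Q * a ^ 3 * a ^ 2 := by gcongr
        _ = _ := by ring
    have h8 : T0 ≤ 2 * (q⁻¹ * a ^ 3 + √Q * (a ^ 2 * √a)) := by
      refine (abs_le_of_sq_le_sq' ?_ (by positivity)).2
      nlinarith [mul_nonneg p1 p2]
    have h9 : a * (a ^ 2 / q + Q * a) = q⁻¹ * a ^ 3 + Q * a ^ 2 := by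
      rw [div_eq_inv_mul]; ring
    rw [h9] at h3
    linarith

/-- For even `d ≥ 4`,
`Λ₄(E) ≲ min { |E|³, q⁻¹|E|³ + q^{(d-2)/4}|E|^{5/2} + q^{(d-2)/2}|E|² }`. -/
theorem additive_quadruples_min_bound (d : ℕ) (hd4 : 4 ≤ d) (hdeven : Even d) :
    ∃ C : ℝ, 0 < C ∧
      ∀ (F : Type) [Field F] [Fintype F] [DecidableEq F], 2 < ringChar F →
        ∀ E : Finset ((Fin (d - 1) → F) × F), E ⊆ parab F d →
          (lambda4 E : ℝ) ≤
            C * min ((E.card : ℝ) ^ 3)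
              ((Fintype.card F : ℝ)⁻¹ * (E.card : ℝ) ^ 3 +
                (Fintype.card F : ℝ) ^ (((d : ℝ) - 2) / 4) * (E.card : ℝ) ^ ((5 : ℝ) / 2) +
                (Fintype.card F : ℝ) ^ (((d : ℝ) - 2) / 2) * (E.card : ℝ) ^ 2) := by
  refine ⟨4, by norm_num, ?_⟩
  intro F _ _ _ hchar E hE
  have hF : ringChar F ≠ 2 := by omega
  obtain ⟨j, hj⟩ := hdeven
  obtain ⟨k, rfl⟩ : ∃ k, j = k + 1 := ⟨j - 1, by omega⟩
  have hn : d - 1 = 2 * k + 1 := by omega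
  obtain ⟨A, hA, hle⟩ := lambda4_le hF E hE
  obtain ⟨D, T0, hT0, hD0, h1, h2, h3⟩ := right_angles hF hn A
  have hq : (1 : ℝ) ≤ Fintype.card F := by exact_mod_cast Fintype.card_pos
  have hq0 : (0 : ℝ) ≤ Fintype.card F := by linarith
  have hT : (∑ x ∈ A, ∑ y ∈ A, ∑ z ∈ A, if (z - x) ⬝ᵥ (z - y) = 0 then (1 : ℝ) else 0) ≤
      (#A : ℝ) ^ 3 := by
    calc _ ≤ ∑ x ∈ A, ∑ y ∈ A, ∑ z ∈ A, (1 : ℝ) :=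
          Finset.sum_le_sum fun _ _ => Finset.sum_le_sum fun _ _ => Finset.sum_le_sum fun _ _ => by
            split_ifs <;> norm_num
      _ = _ := by simp; ring
  have fin := final_arith (#A : ℝ) (Fintype.card F) ((Fintype.card F : ℝ) ^ k) D T0 _
    (by positivity) hq (by positivity) hT0 hD0 h1 h2 h3 hT
  rw [hA] at fin
  have ed : (d : ℝ) = 2 * k + 2 := by rw [hj]; push_cast; ring
  have e1 : (Fintype.card F : ℝ) ^ (((d : ℝ) - 2) / 2) = (Fintype.card F : ℝ) ^ k := by
    rw [← Real.rpow_natCast]; congr 1; rw [ed]; ring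
  have e2 : (Fintype.card F : ℝ) ^ (((d : ℝ) - 2) / 4) = √((Fintype.card F : ℝ) ^ k) := by
    rw [Real.sqrt_eq_rpow, ← Real.rpow_natCast, ← Real.rpow_mul hq0]; congr 1; rw [ed]; ring
  have e3 : (#E : ℝ) ^ ((5 : ℝ) / 2) = (#E : ℝ) ^ 2 * √(#E : ℝ) := by
    rw [Real.sqrt_eq_rpow, ← Real.rpow_natCast, ← Real.rpow_add_of_nonneg (by positivity)
      (by positivity) (by positivity)]
    congr 1; norm_num
  rw [e1, e2, e3]
  exact hle.trans fin
end
end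

section
/- Let d ≥ 3 be odd. There exists a constant C = C(d) > 0 such that the following holds: for every finite field F_q with q = p̲^l elements, where p̲ is an odd prime with p̲ ≡ 3 (mod 4) and l(d−1) is not a multiple of four, and every subset E of the paraboloid S ⊂ F_q^d, one has Λ_4(E) ≤ C · min{ |E|^3, q^{−1}|E|^3 + q^{(d−3)/4}|E|^{5/2} + q^{(d−2)/2}|E|^2 }. -/
open Finset

noncomputable section


section aux
set_option linter.unusedSectionVars false
variable {F : Type} [Field F] [Fintype F] [DecidableEq F] {n : ℕ}

lemma dotp_add_right (a x y : Fin n → F) : dotp a (x + y) = dotp a x + dotp a y := by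
  simp [dotp, mul_add, Finset.sum_add_distrib]
lemma dotp_sub_right (a x y : Fin n → F) : dotp a (x - y) = dotp a x - dotp a y := by
  simp [dotp, mul_sub, Finset.sum_sub_distrib]
lemma dotp_comm (a b : Fin n → F) : dotp a b = dotp b a := by
  simp [dotp, mul_comm]
lemma dotp_smul_right (c : F) (a b : Fin n → F) : dotp a (c • b) = c * dotp a b := by
  simp only [dotp, Finset.mul_sum, Pi.smul_apply, smul_eq_mul]
  exact Finset.sum_congr rfl fun i _ => by ring

lemma char_sum (χ : AddChar F ℂ) {ι : Type} (s : Finset ι) (f : ι → F) :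
    χ (∑ i ∈ s, f i) = ∏ i ∈ s, χ (f i) := by
  classical
  induction s using Finset.induction_on with
  | empty => simp
  | insert a s ha ih => rw [Finset.sum_insert ha, Finset.prod_insert ha, AddChar.map_add_eq_mul, ih]

lemma orth {χ : AddChar F ℂ} (hχ : χ.IsPrimitive) (u : Fin n → F) :
    ∑ y : Fin n → F, χ (dotp y u) = if u = 0 then (Fintype.card F : ℂ) ^ n else 0 := by
  have h : ∀ y : Fin n → F, χ (dotp y u) = ∏ i, χ (y i * u i) := fun y => char_sum χ _ _
  simp_rw [h]
  rw [← Fintype.prod_sum (fun i v => χ (v * u i))]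
  simp_rw [AddChar.sum_mulShift _ hχ]
  split_ifs with h0
  · subst h0; simp
  · obtain ⟨i, hi⟩ := Function.ne_iff.mp h0
    exact Finset.prod_eq_zero (Finset.mem_univ i) (by simpa using hi)

lemma hplane1 {χ : AddChar F ℂ} (hχ : χ.IsPrimitive) (a : Fin n → F) (ha : a ≠ 0) (α : F) :
    Fintype.card F * (univ.filter fun y : Fin n → F => dotp y a = α).card = Fintype.card F ^ n := by
  have key : ((Fintype.card F * (univ.filter fun y : Fin n → F => dotp y a = α).card : ℕ) : ℂ)
      = ∑ y : Fin n → F, ∑ t : F, χ (t * (dotp y a - α)) := by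
    simp_rw [AddChar.sum_mulShift _ hχ, sub_eq_zero]
    push_cast
    rw [← Finset.sum_filter, Finset.sum_const, nsmul_eq_mul, mul_comm]
  have h2 : ∑ y : Fin n → F, ∑ t : F, χ (t * (dotp y a - α)) = (Fintype.card F : ℂ) ^ n := by
    rw [Finset.sum_comm]
    have : ∀ t : F, ∑ y : Fin n → F, χ (t * (dotp y a - α))
        = if t = 0 then (Fintype.card F : ℂ) ^ n else 0 := by
      intro t
      have h3 : ∀ y : Fin n → F, χ (t * (dotp y a - α)) = χ (dotp y (t • a)) * χ (-(t * α)) := by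
        intro y
        rw [← AddChar.map_add_eq_mul, dotp_smul_right]; congr 1; ring
      simp_rw [h3]
      rw [← Finset.sum_mul, orth hχ]
      by_cases ht : t = 0
      · simp [ht]
      · simp [ht, ha]
    simp_rw [this]
    simp
  rw [h2] at key
  exact_mod_cast key

lemma hplane2 {χ : AddChar F ℂ} (hχ : χ.IsPrimitive) (a b : Fin n → F)
    (hab : ∀ s t : F, s • a + t • b = 0 → s = 0 ∧ t = 0) (α β : F) :
    Fintype.card F ^ 2 * (univ.filter fun y : Fin n → F => dotp y a = α ∧ dotp y b = β).card
      = Fintype.card F ^ n := by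
  have key : ((Fintype.card F ^ 2 *
      (univ.filter fun y : Fin n → F => dotp y a = α ∧ dotp y b = β).card : ℕ) : ℂ)
      = ∑ y : Fin n → F, (∑ s : F, χ (s * (dotp y a - α))) * (∑ t : F, χ (t * (dotp y b - β))) := by
    simp_rw [AddChar.sum_mulShift _ hχ, sub_eq_zero]
    push_cast
    rw [Finset.card_filter]
    push_cast
    rw [Finset.mul_sum]
    refine Finset.sum_congr rfl fun y _ => ?_
    by_cases h1 : dotp y a = α <;> by_cases h2 : dotp y b = β <;> simp [h1, h2, sq]
  have h2 : ∑ y : Fin n → F, (∑ s : F, χ (s * (dotp y a - α))) * (∑ t : F, χ (t * (dotp y b - β)))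
      = (Fintype.card F : ℂ) ^ n := by
    simp_rw [Finset.sum_mul_sum]
    rw [Finset.sum_comm]
    simp_rw [Finset.sum_comm (s := (univ : Finset (Fin n → F)))]
    have : ∀ s t : F, ∑ y : Fin n → F, χ (s * (dotp y a - α)) * χ (t * (dotp y b - β))
        = if s = 0 ∧ t = 0 then (Fintype.card F : ℂ) ^ n else 0 := by
      intro s t
      have h3 : ∀ y : Fin n → F, χ (s * (dotp y a - α)) * χ (t * (dotp y b - β))
          = χ (dotp y (s • a + t • b)) * χ (-(s * α + t * β)) := by
        intro y
        rw [← AddChar.map_add_eq_mul, ← AddChar.map_add_eq_mul, dotp_add_right,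
          dotp_smul_right, dotp_smul_right]; congr 1; ring
      simp_rw [h3]
      rw [← Finset.sum_mul, orth hχ]
      by_cases ht : s = 0 ∧ t = 0
      · simp [ht]
      · rw [if_neg (fun h => ht (hab s t h)), if_neg ht, zero_mul]
    simp_rw [this]
    rw [Finset.sum_eq_single 0 (by intro b _ hb; simp [hb]) (by simp)]
    simp
  rw [h2] at key
  exact_mod_cast key

/-- Quadratic Gauss sum. -/
lemma gauss_sq {χ : AddChar F ℂ} (hχ : χ.IsPrimitive) (hq : Fintype.card F % 4 = 3) :
    (∑ v : F, χ (v ^ 2)) ^ 2 = -(Fintype.card F : ℂ) := by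
  have hF : ringChar F ≠ 2 := by
    intro h
    have := FiniteField.even_card_of_char_two h
    omega
  set η : MulChar F ℂ := (quadraticChar F).ringHomComp (Int.castRingHom ℂ)
  have h1 : ∑ v : F, χ (v ^ 2) = gaussSum η χ := by
    have h2 : ∑ v : F, χ (v ^ 2) = ∑ a : F, ∑ v ∈ univ.filter (fun v : F => v ^ 2 = a), χ a := by
      rw [← Finset.sum_fiberwise univ (fun v : F => v ^ 2)]
      refine Finset.sum_congr rfl fun a _ => Finset.sum_congr rfl fun v hv => ?_
      rw [(Finset.mem_filter.mp hv).2]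
    rw [h2]
    have h3 : ∀ a : F, ∑ v ∈ univ.filter (fun v : F => v ^ 2 = a), χ a = η a * χ a + χ a := by
      intro a
      have h4 := quadraticChar_card_sqrts hF a
      have h5 : ({x : F | x ^ 2 = a}.toFinset) = univ.filter (fun v : F => v ^ 2 = a) := by
        ext; simp
      rw [h5] at h4
      rw [Finset.sum_const, nsmul_eq_mul]
      have h6 : ((univ.filter (fun v : F => v ^ 2 = a)).card : ℂ) = η a + 1 := by
        simp only [η, MulChar.ringHomComp_apply]
        have := congrArg (Int.cast : ℤ → ℂ) h4
        push_cast at this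
        simpa using this
      rw [h6]; ring
    simp_rw [h3]
    rw [Finset.sum_add_distrib, gaussSum]
    have := AddChar.sum_mulShift (1 : F) hχ
    simp at this
    rw [this, add_zero]
  rw [h1, gaussSum_sq]
  · have : quadraticChar F (-1) = -1 := by
      rw [quadraticChar_neg_one hF, ZMod.χ₄_nat_three_mod_four hq]
    simp [η, this]
  · exact (MulChar.ringHomComp_ne_one_iff Int.cast_injective).mpr (quadraticChar_ne_one hF)
  · exact (quadraticChar_isQuadratic F).comp _
  · exact hχ
end aux

section aux2
set_option linter.unusedSectionVars false
variable {F : Type} [Field F] [Fintype F] [DecidableEq F] {n : ℕ}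

lemma dotp_sub_left (a x y : Fin n → F) : dotp (x - y) a = dotp x a - dotp y a := by
  rw [dotp_comm, dotp_sub_right, dotp_comm a x, dotp_comm a y]

lemma gauss_sq_shift {χ : AddChar F ℂ} (hχ : χ.IsPrimitive) (hq : Fintype.card F % 4 = 3)
    {s : F} (hs : s ≠ 0) :
    (∑ v : F, χ (s * v ^ 2)) ^ 2 = -(Fintype.card F : ℂ) := by
  have h : (χ.mulShift s).IsPrimitive := by
    intro a ha
    rw [AddChar.mulShift_mulShift]
    exact hχ (mul_ne_zero hs ha)
  simpa [AddChar.mulShift_apply] using gauss_sq h hq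

lemma four_ne (hq : Fintype.card F % 4 = 3) : (2 : F) ≠ 0 := by
  have hF : ringChar F ≠ 2 := by
    intro h
    have := FiniteField.even_card_of_char_two h
    omega
  exact Ring.two_ne_zero hF

lemma gauss_one (χ : AddChar F ℂ) (h2 : (2 : F) ≠ 0) {s : F} (hs : s ≠ 0) (u : F) :
    ∑ v : F, χ (s * v ^ 2 + v * u) = χ (-(4 * s)⁻¹ * u ^ 2) * ∑ v : F, χ (s * v ^ 2) := by
  rw [Finset.mul_sum]
  refine Fintype.sum_equiv (Equiv.addRight (u / (2 * s))) _ _ fun v => ?_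
  rw [← AddChar.map_add_eq_mul]
  congr 1
  have h4 : (4 : F) ≠ 0 := by
    have : (4 : F) = 2 * 2 := by norm_num
    rw [this]; exact mul_ne_zero h2 h2
  simp only [Equiv.coe_addRight]
  field_simp
  ring

lemma gauss_vec {χ : AddChar F ℂ} (hχ : χ.IsPrimitive) (hq : Fintype.card F % 4 = 3)
    {m : ℕ} (hm : Odd m) (hn : n = 2 * m) {s : F} (hs : s ≠ 0) (u : Fin n → F) :
    ∑ ξ : Fin n → F, χ (s * dotp ξ ξ) * χ (dotp ξ u)
      = -(Fintype.card F : ℂ) ^ m * χ (-(4 * s)⁻¹ * dotp u u) := by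
  have h1 : ∀ ξ : Fin n → F, χ (s * dotp ξ ξ) * χ (dotp ξ u)
      = ∏ i, χ (s * ξ i ^ 2 + ξ i * u i) := by
    intro ξ
    rw [← char_sum, ← AddChar.map_add_eq_mul, Finset.sum_add_distrib, ← Finset.mul_sum]
    simp [dotp, sq]
  simp_rw [h1]
  rw [← Fintype.prod_sum (fun i v => χ (s * v ^ 2 + v * u i))]
  simp_rw [gauss_one χ (four_ne hq) hs]
  rw [Finset.prod_mul_distrib, ← char_sum, ← Finset.mul_sum, Finset.prod_const, Finset.card_univ,
    Fintype.card_fin]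
  have hp : (∑ v : F, χ (s * v ^ 2)) ^ n = -(Fintype.card F : ℂ) ^ m := by
    rw [hn, pow_mul, gauss_sq_shift hχ hq hs, hm.neg_pow]
  rw [hp, mul_comm]
  simp [dotp, sq]

lemma sum_nz {χ : AddChar F ℂ} (hχ : χ.IsPrimitive) (c : F) :
    ∑ s ∈ univ.erase (0 : F), χ (s * c) = (if c = 0 then (Fintype.card F : ℂ) else 0) - 1 := by
  have h := AddChar.sum_mulShift c hχ
  rw [← Finset.add_sum_erase univ _ (Finset.mem_univ (0 : F))] at h
  simp only [zero_mul, AddChar.map_zero_eq_one] at h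
  rw [eq_sub_iff_add_eq, add_comm, h]
  split_ifs <;> simp

lemma iso_identity {χ : AddChar F ℂ} (hχ : χ.IsPrimitive) (hq : Fintype.card F % 4 = 3)
    {m : ℕ} (hm : Odd m) (hn : n = 2 * m) (u : Fin n → F) :
    ∑ ξ : Fin n → F, ((if dotp ξ ξ = 0 then (Fintype.card F : ℂ) else 0) - 1) * χ (dotp ξ u)
      = -(Fintype.card F : ℂ) ^ m * ((if dotp u u = 0 then (Fintype.card F : ℂ) else 0) - 1) := by
  simp_rw [← sum_nz hχ, Finset.sum_mul]
  rw [Finset.sum_comm, Finset.mul_sum]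
  have h2 := four_ne hq
  have h4 : (4 : F) ≠ 0 := by
    have : (4 : F) = 2 * 2 := by norm_num
    rw [this]; exact mul_ne_zero h2 h2
  refine Finset.sum_bij' (fun s _ => -(4 * s)⁻¹) (fun s _ => -(4 * s)⁻¹) ?_ ?_ ?_ ?_ ?_
  · intro s hs; simpa [h4] using hs
  · intro s hs; simpa [h4] using hs
  · intro s hs
    have : s ≠ 0 := by simpa using hs
    field_simp
  · intro s hs
    have : s ≠ 0 := by simpa using hs
    field_simp
  · intro s hs
    have : s ≠ 0 := by simpa using hs
    exact gauss_vec hχ hq hm hn this u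

lemma iso_count (hq : Fintype.card F % 4 = 3)
    {m : ℕ} (hm : Odd m) (hn : n = 2 * m) (A : Finset (Fin n → F)) :
    (Fintype.card F : ℝ) * ∑ x ∈ A, ∑ z ∈ A, (if dotp (z - x) (z - x) = 0 then (1 : ℝ) else 0)
      ≤ (A.card : ℝ) ^ 2 + (Fintype.card F : ℝ) ^ m * A.card := by
  set χ : AddChar F ℂ := AddChar.FiniteField.primitiveChar_to_Complex F
  have hχ : χ.IsPrimitive := AddChar.FiniteField.primitiveChar_to_Complex_isPrimitive F
  set q : ℕ := Fintype.card F with hqdef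
  have hq0 : (0 : ℝ) < q := by
    have : 0 < q := Fintype.card_pos
    exact_mod_cast this
  have hnorm : ∀ ξ : Fin n → F, ∑ x ∈ A, ∑ z ∈ A, χ (dotp ξ (z - x))
      = ((‖∑ z ∈ A, χ (dotp ξ z)‖ ^ 2 : ℝ) : ℂ) := by
    intro ξ
    push_cast
    rw [← Complex.mul_conj', map_sum, Finset.sum_mul_sum, Finset.sum_comm]
    refine Finset.sum_congr rfl fun z _ => Finset.sum_congr rfl fun x _ => ?_
    rw [← AddChar.map_neg_eq_conj, ← AddChar.map_add_eq_mul, dotp_sub_right, sub_eq_add_neg]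
  -- Parseval
  have hP : ∑ ξ : Fin n → F, ‖∑ z ∈ A, χ (dotp ξ z)‖ ^ 2 = (q : ℝ) ^ n * A.card := by
    have : ((∑ ξ : Fin n → F, ‖∑ z ∈ A, χ (dotp ξ z)‖ ^ 2 : ℝ) : ℂ) = (q : ℂ) ^ n * A.card := by
      rw [Complex.ofReal_sum]
      simp_rw [← hnorm]
      rw [Finset.sum_comm]
      simp_rw [Finset.sum_comm (s := (univ : Finset (Fin n → F))), orth hχ, sub_eq_zero]
      simp [mul_comm, hqdef]
    exact_mod_cast this
  have hM : ∑ ξ : Fin n → F, ((if dotp ξ ξ = 0 then (q : ℝ) else 0) - 1) *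
      ‖∑ z ∈ A, χ (dotp ξ z)‖ ^ 2
      = -(q : ℝ) ^ m * ∑ x ∈ A, ∑ z ∈ A, ((if dotp (z - x) (z - x) = 0 then (q : ℝ) else 0) - 1) := by
    have : ((∑ ξ : Fin n → F, ((if dotp ξ ξ = 0 then (q : ℝ) else 0) - 1) *
      ‖∑ z ∈ A, χ (dotp ξ z)‖ ^ 2 : ℝ) : ℂ)
      = ((-(q : ℝ) ^ m * ∑ x ∈ A, ∑ z ∈ A,
          ((if dotp (z - x) (z - x) = 0 then (q : ℝ) else 0) - 1) : ℝ) : ℂ) := by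
      rw [Complex.ofReal_sum]
      simp_rw [Complex.ofReal_mul, ← hnorm]
      simp_rw [Finset.mul_sum]
      rw [Finset.sum_comm]
      simp_rw [Finset.sum_comm (s := (univ : Finset (Fin n → F)))]
      rw [Complex.ofReal_sum, Finset.mul_sum]
      simp_rw [Complex.ofReal_sum, Finset.mul_sum]
      refine Finset.sum_congr rfl fun z _ => Finset.sum_congr rfl fun x _ => ?_
      have := iso_identity hχ hq hm hn (x - z)
      push_cast [apply_ite (Complex.ofReal)]
      exact this
    exact_mod_cast this
  have hL : -((q : ℝ) ^ n * A.card) ≤ ∑ ξ : Fin n → F, ((if dotp ξ ξ = 0 then (q : ℝ) else 0) - 1) *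
      ‖∑ z ∈ A, χ (dotp ξ z)‖ ^ 2 := by
    rw [← hP, ← Finset.sum_neg_distrib]
    refine Finset.sum_le_sum fun ξ _ => ?_
    have h0 := sq_nonneg ‖∑ z ∈ A, χ (dotp ξ z)‖
    split_ifs
    · nlinarith
    · linarith
  rw [hM] at hL
  have hS : ∑ x ∈ A, ∑ z ∈ A, ((if dotp (z - x) (z - x) = 0 then (q : ℝ) else 0) - 1)
      = q * (∑ x ∈ A, ∑ z ∈ A, (if dotp (z - x) (z - x) = 0 then (1 : ℝ) else 0))
        - (A.card : ℝ) ^ 2 := by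
    simp_rw [Finset.sum_sub_distrib, Finset.mul_sum]
    simp [sq]
  rw [hS] at hL
  have hpow : (q : ℝ) ^ n = q ^ m * q ^ m := by rw [hn, two_mul, pow_add]
  rw [hpow] at hL
  have hqm : (0 : ℝ) < (q : ℝ) ^ m := by positivity
  by_contra hcon
  push Not at hcon
  nlinarith [mul_lt_mul_of_pos_left hcon hqm]

lemma incidence (x : Fin n → F) (A : Finset (Fin n → F)) (r : ℝ) (hr : 0 ≤ r)
    (hr2 : r ^ 2 = (Fintype.card F : ℝ) ^ (n + 1)) :
    (Fintype.card F : ℝ) * ∑ z ∈ A.filter (fun z => dotp (z - x) (z - x) ≠ 0), ∑ y ∈ A,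
      (if dotp y (z - x) = dotp z (z - x) then (1 : ℝ) else 0)
      ≤ (A.card : ℝ) ^ 2 + r * A.card := by
  set χ : AddChar F ℂ := AddChar.FiniteField.primitiveChar_to_Complex F
  have hχ : χ.IsPrimitive := AddChar.FiniteField.primitiveChar_to_Complex_isPrimitive F
  set q : ℕ := Fintype.card F with hqdef
  set B := A.filter (fun z => dotp (z - x) (z - x) ≠ 0) with hB
  have hq0 : (0 : ℝ) < q := by
    have : 0 < q := Fintype.card_pos
    exact_mod_cast this
  set e : (Fin n → F) → (Fin n → F) → ℝ :=
    fun z y => if dotp y (z - x) = dotp z (z - x) then (1 : ℝ) else 0 with he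
  set k : (Fin n → F) → ℝ := fun y => ∑ z ∈ B, e z y with hk
  have hBne : ∀ z ∈ B, dotp (z - x) (z - x) ≠ 0 := fun z hz => (Finset.mem_filter.mp hz).2
  have hne0 : ∀ z ∈ B, z - x ≠ 0 := by
    intro z hz h
    exact hBne z hz (by rw [h]; simp [dotp])
  have h1 : ∀ z ∈ B, (q : ℝ) * ∑ y, e z y = (q : ℝ) ^ n := by
    intro z hz
    have := hplane1 hχ (z - x) (hne0 z hz) (dotp z (z - x))
    simp only [he, Finset.sum_boole]
    exact_mod_cast this
  have h2 : ∀ z ∈ B, ∀ z' ∈ B, z ≠ z' → (q : ℝ) ^ 2 * ∑ y, e z y * e z' y ≤ (q : ℝ) ^ n := by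
    intro z hz z' hz' hzz
    have hee : ∑ y, e z y * e z' y = ((univ.filter fun y : Fin n → F =>
        dotp y (z - x) = dotp z (z - x) ∧ dotp y (z' - x) = dotp z' (z' - x)).card : ℝ) := by
      rw [← Finset.sum_boole]
      refine Finset.sum_congr rfl fun y _ => ?_
      simp only [he]
      by_cases g1 : dotp y (z - x) = dotp z (z - x) <;>
        by_cases g2 : dotp y (z' - x) = dotp z' (z' - x) <;> simp [g1, g2]
    rw [hee]
    by_cases hab : ∀ s t : F, s • (z - x) + t • (z' - x) = 0 → s = 0 ∧ t = 0
    · have := hplane2 hχ (z - x) (z' - x) hab (dotp z (z - x)) (dotp z' (z' - x))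
      exact le_of_eq (by exact_mod_cast this)
    · have hempty : (univ.filter fun y : Fin n → F =>
        dotp y (z - x) = dotp z (z - x) ∧ dotp y (z' - x) = dotp z' (z' - x)) = ∅ := by
        rw [Finset.filter_eq_empty_iff]
        rintro y - ⟨g1, g2⟩
        push Not at hab
        obtain ⟨s, t, hst, hst0⟩ := hab
        have ht : t ≠ 0 := by
          intro ht
          have hs : s ≠ 0 := fun hs => hst0 hs ht
          rw [ht, zero_smul, add_zero] at hst
          exact hne0 z hz ((smul_eq_zero.mp hst).resolve_left hs)
        obtain ⟨c, hc⟩ : ∃ c : F, z' - x = c • (z - x) := by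
          refine ⟨-(s / t), ?_⟩
          have h3 : t • (z' - x) = -(s • (z - x)) := by
            rw [eq_neg_iff_add_eq_zero, add_comm]; exact hst
          have h4 : z' - x = t⁻¹ • (t • (z' - x)) := by rw [smul_smul, inv_mul_cancel₀ ht, one_smul]
          rw [h4, h3, smul_neg, smul_smul, neg_smul]; congr 2; field_simp
        have k1 : dotp (y - x) (z - x) = dotp (z - x) (z - x) := by
          rw [dotp_sub_left, dotp_sub_left, g1]
        have k2 : dotp (y - x) (z' - x) = dotp (z' - x) (z' - x) := by
          rw [dotp_sub_left, dotp_sub_left, g2]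
        rw [hc, dotp_smul_right, dotp_smul_right, dotp_comm (c • _), dotp_smul_right, k1] at k2
        have hQ := hBne z hz
        have hc0 : c ≠ 0 := by
          intro h0
          rw [h0, zero_smul] at hc
          exact hne0 z' hz' hc
        have hc1 : c = 1 := by
          have h5 := mul_left_cancel₀ hc0 k2
          exact (mul_right_cancel₀ hQ (by rw [one_mul]; exact h5)).symm
        rw [hc1, one_smul] at hc
        exact hzz (sub_left_injective hc).symm
      rw [hempty]; simp
  have hk1 : (q : ℝ) * ∑ y, k y = B.card * (q : ℝ) ^ n := by
    simp only [hk]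
    rw [Finset.sum_comm, Finset.mul_sum, Finset.sum_congr rfl h1]; simp
  have hk2 : (q : ℝ) ^ 2 * ∑ y, k y ^ 2 ≤ B.card * (q : ℝ) ^ (n + 1) + (B.card : ℝ) ^ 2 * q ^ n := by
    have hexp : (q : ℝ) ^ 2 * ∑ y, k y ^ 2
        = ∑ z ∈ B, ∑ z' ∈ B, (q : ℝ) ^ 2 * ∑ y, e z y * e z' y := by
      simp only [hk, sq, Finset.sum_mul_sum]
      rw [Finset.sum_comm, Finset.mul_sum]
      refine Finset.sum_congr rfl fun z _ => ?_
      rw [Finset.sum_comm, Finset.mul_sum]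
    have hb : ∀ z ∈ B, ∀ z' ∈ B, (q : ℝ) ^ 2 * ∑ y, e z y * e z' y
        ≤ (if z = z' then (q : ℝ) ^ (n + 1) else 0) + (q : ℝ) ^ n := by
      intro z hz z' hz'
      split_ifs with h
      · subst h
        have : ∑ y, e z y * e z y = ∑ y, e z y := by
          refine Finset.sum_congr rfl fun y _ => ?_
          simp [he]
        rw [this, sq, mul_assoc, h1 z hz, pow_succ]
        have : (0 : ℝ) ≤ (q : ℝ) ^ n := by positivity
        linarith
      · rw [zero_add]; exact h2 z hz z' hz' h
    rw [hexp]
    refine (Finset.sum_le_sum fun z hz => Finset.sum_le_sum fun z' hz' => hb z hz z' hz').trans ?_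
    apply le_of_eq
    simp_rw [Finset.sum_add_distrib]
    simp only [Finset.sum_ite_eq, Finset.sum_const, nsmul_eq_mul]
    rw [Finset.sum_ite_mem]
    simp
    ring
  have hvar : ∑ y, ((q : ℝ) * k y - B.card) ^ 2 ≤ B.card * (q : ℝ) ^ (n + 1) := by
    have : ∑ y, ((q : ℝ) * k y - B.card) ^ 2
        = (q : ℝ) ^ 2 * ∑ y, k y ^ 2 - 2 * B.card * ((q : ℝ) * ∑ y, k y)
          + (q : ℝ) ^ n * (B.card : ℝ) ^ 2 := by
      have hc : (q : ℝ) ^ n * (B.card : ℝ) ^ 2 = ∑ y : Fin n → F, (B.card : ℝ) ^ 2 := by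
        simp [hqdef]
      rw [hc, Finset.mul_sum, Finset.mul_sum, Finset.mul_sum, ← Finset.sum_sub_distrib,
        ← Finset.sum_add_distrib]
      exact Finset.sum_congr rfl fun y _ => by ring
    rw [this, hk1]
    nlinarith
  have hcs : (∑ y ∈ A, ((q : ℝ) * k y - B.card)) ^ 2 ≤ (r * A.card) ^ 2 := by
    have hBA : (B.card : ℝ) ≤ A.card := by exact_mod_cast Finset.card_filter_le _ _
    calc (∑ y ∈ A, ((q : ℝ) * k y - B.card)) ^ 2
        ≤ A.card * ∑ y ∈ A, ((q : ℝ) * k y - B.card) ^ 2 := sq_sum_le_card_mul_sum_sq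
      _ ≤ A.card * ∑ y, ((q : ℝ) * k y - B.card) ^ 2 := by
          refine mul_le_mul_of_nonneg_left ?_ (by positivity)
          exact Finset.sum_le_sum_of_subset_of_nonneg (Finset.subset_univ _)
            fun y _ _ => sq_nonneg ((q : ℝ) * k y - B.card)
      _ ≤ A.card * (A.card * (q : ℝ) ^ (n + 1)) := by
          gcongr
          exact hvar.trans (by gcongr)
      _ = (r * A.card) ^ 2 := by rw [mul_pow, hr2]; ring
  have hle := abs_le_of_sq_le_sq' hcs (by positivity)
  have hsum : ∑ y ∈ A, ((q : ℝ) * k y - B.card)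
      = q * (∑ z ∈ B, ∑ y ∈ A, e z y) - A.card * B.card := by
    rw [Finset.sum_sub_distrib, ← Finset.mul_sum, Finset.sum_comm]
    simp
  have hBA : (B.card : ℝ) ≤ A.card := by exact_mod_cast Finset.card_filter_le _ _
  have := hle.2
  rw [hsum] at this
  have hA0 : (0 : ℝ) ≤ A.card := by positivity
  nlinarith [mul_le_mul_of_nonneg_left hBA hA0]
end aux2

section aux3
set_option linter.unusedSectionVars false
variable {F : Type} [Field F] [Fintype F] [DecidableEq F] {n : ℕ}

lemma dotp_add_left (a x y : Fin n → F) : dotp (x + y) a = dotp x a + dotp y a := by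
  rw [dotp_comm, dotp_add_right, dotp_comm a x, dotp_comm a y]

lemma triple_bound (hq : Fintype.card F % 4 = 3) {m : ℕ} (hm : Odd m) (hn : n = 2 * m)
    (A : Finset (Fin n → F)) (r : ℝ) (hr : 0 ≤ r)
    (hr2 : r ^ 2 = (Fintype.card F : ℝ) ^ (n + 1)) :
    (Fintype.card F : ℝ) * ∑ x ∈ A, ∑ z ∈ A, ∑ y ∈ A,
      (if dotp y (z - x) = dotp z (z - x) then (1 : ℝ) else 0)
      ≤ 2 * ((A.card : ℝ) ^ 3 + r * (A.card : ℝ) ^ 2) := by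
  have hiso := iso_count hq hm hn A
  have hq1 : (1 : ℝ) ≤ (Fintype.card F : ℝ) := by
    have : 0 < Fintype.card F := Fintype.card_pos
    exact_mod_cast this
  set q : ℝ := (Fintype.card F : ℝ)
  have hqm : q ^ m ≤ r := by
    refine (pow_le_pow_iff_left₀ (by positivity) hr two_ne_zero).mp ?_
    rw [hr2, ← pow_mul]
    exact pow_le_pow_right₀ hq1 (by omega)
  have hsplit : ∀ x ∈ A, q * ∑ z ∈ A, ∑ y ∈ A,
      (if dotp y (z - x) = dotp z (z - x) then (1 : ℝ) else 0)
      ≤ q * (∑ z ∈ A, (if dotp (z - x) (z - x) = 0 then (1 : ℝ) else 0)) * A.card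
        + ((A.card : ℝ) ^ 2 + r * A.card) := by
    intro x _
    have hI := incidence x A r hr hr2
    rw [← Finset.sum_filter_add_sum_filter_not A (fun z => dotp (z - x) (z - x) = 0), mul_add]
    refine add_le_add ?_ hI
    rw [← Finset.sum_filter, mul_assoc]
    refine mul_le_mul_of_nonneg_left ?_ (by linarith)
    rw [Finset.sum_mul]
    refine Finset.sum_le_sum fun z _ => ?_
    rw [one_mul, Finset.sum_boole]
    exact_mod_cast Finset.card_filter_le _ _
  rw [Finset.mul_sum]
  refine (Finset.sum_le_sum hsplit).trans ?_
  rw [Finset.sum_add_distrib, ← Finset.sum_mul, ← Finset.mul_sum, Finset.sum_const, nsmul_eq_mul]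
  have hA0 : (0 : ℝ) ≤ A.card := by positivity
  have h1 := mul_le_mul_of_nonneg_right hiso hA0
  have h2 : q ^ m * (A.card : ℝ) ^ 2 ≤ r * (A.card : ℝ) ^ 2 := by gcongr
  nlinarith

lemma lambda_le {d : ℕ} (h2 : (2 : F) ≠ 0) (E : Finset ((Fin (d - 1) → F) × F))
    (hE : E ⊆ parab F d) :
    (lambda4 E : ℝ) ≤ ∑ x ∈ E.image Prod.fst, ∑ z ∈ E.image Prod.fst, ∑ y ∈ E.image Prod.fst,
      (if dotp y (z - x) = dotp z (z - x) then (1 : ℝ) else 0) := by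
  have hQ : ∀ x ∈ E, x.2 = dotp x.1 x.1 := fun x hx => by
    simpa [parab] using hE hx
  set A := E.image Prod.fst with hA
  have hR : ∑ x ∈ A, ∑ z ∈ A, ∑ y ∈ A,
      (if dotp y (z - x) = dotp z (z - x) then (1 : ℝ) else 0)
      = (((A ×ˢ A ×ˢ A).filter fun t => dotp t.2.2 (t.2.1 - t.1) = dotp t.2.1 (t.2.1 - t.1)).card
        : ℝ) := by
    rw [← Finset.sum_boole, Finset.sum_product]
    refine Finset.sum_congr rfl fun x _ => ?_
    rw [Finset.sum_product]
  rw [hR, lambda4]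
  norm_cast
  refine Finset.card_le_card_of_injOn (fun t => (t.1.1, t.2.2.1.1, t.2.1.1)) ?_ ?_
  · rintro ⟨x, y, z, w⟩ ht
    simp only [Finset.coe_filter, Finset.mem_product, Set.mem_ofPred_eq] at ht
    obtain ⟨⟨hx, hy, hz, hw⟩, hs⟩ := ht
    simp only [Finset.coe_filter, Finset.mem_product, Set.mem_ofPred_eq]
    refine ⟨⟨Finset.mem_image_of_mem _ hx, Finset.mem_image_of_mem _ hz,
      Finset.mem_image_of_mem _ hy⟩, ?_⟩
    have e1 : x.1 + y.1 = z.1 + w.1 := congrArg Prod.fst hs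
    have e2 : x.2 + y.2 = z.2 + w.2 := congrArg Prod.snd hs
    have hw1 : w.1 = x.1 + y.1 - z.1 := by rw [e1]; abel
    rw [hQ x hx, hQ y hy, hQ z hz, hQ w hw, hw1] at e2
    have c1 := dotp_comm x.1 y.1
    have c2 := dotp_comm x.1 z.1
    have c3 := dotp_comm y.1 z.1
    simp only [dotp_sub_right, dotp_add_right, dotp_sub_left, dotp_add_left] at e2
    rw [dotp_sub_right, dotp_sub_right]
    apply mul_left_cancel₀ h2
    linear_combination e2 + c1 - c2 + c3
  · rintro ⟨x, y, z, w⟩ ht ⟨x', y', z', w'⟩ ht' heq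
    simp only [Finset.coe_filter, Finset.mem_product, Set.mem_ofPred_eq] at ht ht'
    obtain ⟨⟨hx, hy, hz, hw⟩, hs⟩ := ht
    obtain ⟨⟨hx', hy', hz', hw'⟩, hs'⟩ := ht'
    simp only [Prod.mk.injEq] at heq
    obtain ⟨a1, a2, a3⟩ := heq
    have b1 : x = x' := Prod.ext a1 (by rw [hQ x hx, hQ x' hx', a1])
    have b2 : z = z' := Prod.ext a2 (by rw [hQ z hz, hQ z' hz', a2])
    have b3 : y = y' := Prod.ext a3 (by rw [hQ y hy, hQ y' hy', a3])
    subst b1 b2 b3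
    have : w = w' := add_left_cancel (hs.symm.trans hs')
    rw [this]

lemma lambda_triv {d : ℕ} (E : Finset ((Fin (d - 1) → F) × F)) :
    lambda4 E ≤ E.card ^ 3 := by
  have : E.card ^ 3 = (E ×ˢ E ×ˢ E).card := by simp only [Finset.card_product]; ring
  rw [this, lambda4]
  refine Finset.card_le_card_of_injOn (fun t => (t.1, t.2.1, t.2.2.1)) ?_ ?_
  · rintro ⟨x, y, z, w⟩ ht
    simp only [Finset.coe_filter, Finset.mem_product, Set.mem_ofPred_eq] at ht
    simp [ht]
  · rintro ⟨x, y, z, w⟩ ht ⟨x', y', z', w'⟩ ht' heq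
    simp only [Finset.coe_filter, Finset.mem_product, Set.mem_ofPred_eq] at ht ht'
    simp only [Prod.mk.injEq] at heq
    obtain ⟨rfl, rfl, rfl⟩ := heq
    have : w = w' := add_left_cancel (ht.2.symm.trans ht'.2)
    rw [this]
end aux3

/-- For odd `d ≥ 3` and `q = p̲^l` with `p̲ ≡ 3 (mod 4)` prime and
`4 ∤ l(d-1)`: `Λ₄(E) ≲ min { |E|³, q⁻¹|E|³ + q^{(d-3)/4}|E|^{5/2} + q^{(d-2)/2}|E|² }`. -/
theorem additive_quadruples_min_bound_odd (d : ℕ) (hd3 : 3 ≤ d) (hdodd : Odd d) :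
    ∃ C : ℝ, 0 < C ∧
      ∀ (F : Type) [Field F] [Fintype F] [DecidableEq F], ∀ pp l : ℕ,
        pp.Prime → pp % 4 = 3 → Fintype.card F = pp ^ l → ¬ (4 ∣ l * (d - 1)) →
        ∀ E : Finset ((Fin (d - 1) → F) × F), E ⊆ parab F d →
          (lambda4 E : ℝ) ≤
            C * min ((E.card : ℝ) ^ 3)
              ((Fintype.card F : ℝ)⁻¹ * (E.card : ℝ) ^ 3 +
                (Fintype.card F : ℝ) ^ (((d : ℝ) - 3) / 4) * (E.card : ℝ) ^ ((5 : ℝ) / 2) +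
                (Fintype.card F : ℝ) ^ (((d : ℝ) - 2) / 2) * (E.card : ℝ) ^ 2) := by

  refine ⟨2, by norm_num, ?_⟩
  intro F _ _ _ pp l hpp hp4 hcard h4 E hE
  obtain ⟨m, hm⟩ := hdodd
  have hn : d - 1 = 2 * m := by omega
  have hlodd : Odd l := by
    rw [← Nat.not_even_iff_odd]
    rintro ⟨a, ha⟩
    exact h4 ⟨a * m, by rw [hn, ha]; ring⟩
  have hmodd : Odd m := by
    rw [← Nat.not_even_iff_odd]
    rintro ⟨a, ha⟩
    exact h4 ⟨l * a, by rw [hn, ha]; ring⟩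
  have hq : Fintype.card F % 4 = 3 := by
    rw [hcard]
    obtain ⟨a, rfl⟩ := hlodd
    rw [pow_succ, pow_mul, Nat.mul_mod, Nat.pow_mod, Nat.pow_mod pp 2 4, hp4]
    norm_num
  have hq0 : (0 : ℝ) < (Fintype.card F : ℝ) := by
    have : 0 < Fintype.card F := Fintype.card_pos
    exact_mod_cast this
  have hAcard : (E.image Prod.fst).card = E.card := by
    apply Finset.card_image_of_injOn
    intro x hx y hy hxy
    have h1 : x.2 = dotp x.1 x.1 := by simpa [parab] using hE hx
    have h2 : y.2 = dotp y.1 y.1 := by simpa [parab] using hE hy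
    exact Prod.ext hxy (by rw [h1, h2, hxy])
  have hlam := lambda_le (four_ne hq) E hE
  set q : ℝ := (Fintype.card F : ℝ) with hqd
  have hr2 : (q * q ^ (((d : ℝ) - 2) / 2)) ^ 2 = q ^ (d - 1 + 1) := by
    rw [mul_pow, ← Real.rpow_mul_natCast hq0.le]
    have e1 : ((d : ℝ) - 2) / 2 * ((2 : ℕ) : ℝ) = ((d - 2 : ℕ) : ℝ) := by
      rw [Nat.cast_sub (by omega)]; push_cast; ring
    rw [e1, Real.rpow_natCast, ← pow_add]
    congr 1; omega
  have hT := triple_bound hq hmodd hn (E.image Prod.fst) (q * q ^ (((d : ℝ) - 2) / 2))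
    (by positivity) hr2
  rw [hAcard] at hT
  have hmain : q * (lambda4 E : ℝ)
      ≤ 2 * ((E.card : ℝ) ^ 3 + q * q ^ (((d : ℝ) - 2) / 2) * (E.card : ℝ) ^ 2) :=
    (mul_le_mul_of_nonneg_left hlam hq0.le).trans hT
  have htriv : (lambda4 E : ℝ) ≤ (E.card : ℝ) ^ 3 := by exact_mod_cast lambda_triv E
  rw [mul_min_of_nonneg _ _ (by norm_num : (0 : ℝ) ≤ 2)]
  apply le_min
  · have : (0 : ℝ) ≤ (E.card : ℝ) ^ 3 := by positivity
    linarith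
  · have hmid : 0 ≤ q ^ (((d : ℝ) - 3) / 4) * (E.card : ℝ) ^ ((5 : ℝ) / 2) := by positivity
    have h5 : (lambda4 E : ℝ)
        ≤ 2 * (q⁻¹ * (E.card : ℝ) ^ 3 + q ^ (((d : ℝ) - 2) / 2) * (E.card : ℝ) ^ 2) := by
      rw [← mul_le_mul_iff_right₀ hq0]
      refine hmain.trans (le_of_eq ?_)
      field_simp
    linarith
end
end

section
/- Let d ≥ 4 be even and let F_q be a finite field with q elements of characteristic greater than two in which −1 is a square, say i² = −1 for some i ∈ F_q. Then the set H = { (s₁, i s₁, …, s_k, i s_k, …, s_{(d−2)/2}, i s_{(d−2)/2}, 0, 0) : s_k ∈ F_q, k = 1, …, (d−2)/2 } is an F_q-linear subspace of F_q^d of dimension (d−2)/2 (so |H| = q^{(d−2)/2}) which is contained in the paraboloid S. -/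
open Finset

noncomputable section

/-- The set `H = {(s₁, i s₁, …, s_{(d-2)/2}, i s_{(d-2)/2}, 0, 0)}` in
`F^d = F^{d-1} × F` (for even `d`): the last component and the last coordinate of the
first component vanish, and each odd-indexed coordinate is `i` times the preceding one. -/
def evenSubset (F : Type) [CommRing F] (d : ℕ) (i : F) : Set ((Fin (d - 1) → F) × F) :=
  {x | x.2 = 0 ∧ (∀ j : Fin (d - 1), (j : ℕ) = d - 2 → x.1 j = 0) ∧
    ∀ j : Fin (d - 1), Odd (j : ℕ) →
      x.1 j = i * x.1 ⟨(j : ℕ) - 1, lt_of_le_of_lt (Nat.sub_le _ _) j.isLt⟩}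

/-- For even `d ≥ 4` and `i² = -1` in `F`, the set `H` is an
`F`-linear subspace of `F^d` of dimension `(d-2)/2` (so `|H| = q^{(d-2)/2}`)
contained in the paraboloid `S`. -/
theorem even_subspace_in_paraboloid (d : ℕ) (hd4 : 4 ≤ d) (hdeven : Even d)
    (F : Type) [Field F] [Fintype F] [DecidableEq F] (hchar : 2 < ringChar F)
    (i : F) (hi : i ^ 2 = -1) :
    ∃ W : Submodule F ((Fin (d - 1) → F) × F),
      (W : Set ((Fin (d - 1) → F) × F)) = evenSubset F d i ∧
      Module.finrank F W = (d - 2) / 2 ∧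
      Nat.card (evenSubset F d i) = Fintype.card F ^ ((d - 2) / 2) ∧
      evenSubset F d i ⊆ {x : (Fin (d - 1) → F) × F | x.2 = dotp x.1 x.1} := by
  obtain ⟨m', hm'⟩ := hdeven
  obtain ⟨m, rfl⟩ : ∃ m, m' = m + 1 := ⟨m' - 1, by omega⟩
  have hm : (d - 2) / 2 = m := by omega
  let W : Submodule F ((Fin (d - 1) → F) × F) :=
    { carrier := evenSubset F d i
      zero_mem' := by
        refine ⟨rfl, fun j _ => rfl, fun j _ => ?_⟩
        simp
      add_mem' := by
        rintro a b ⟨ha1, ha2, ha3⟩ ⟨hb1, hb2, hb3⟩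
        refine ⟨?_, fun j hj => ?_, fun j hj => ?_⟩
        · simp [ha1, hb1]
        · simp [ha2 j hj, hb2 j hj]
        · simp only [Prod.fst_add, Pi.add_apply]
          rw [ha3 j hj, hb3 j hj]
          ring
      smul_mem' := by
        rintro c a ⟨ha1, ha2, ha3⟩
        refine ⟨?_, fun j hj => ?_, fun j hj => ?_⟩
        · simp [ha1]
        · simp [ha2 j hj]
        · simp only [Prod.smul_fst, Pi.smul_apply, smul_eq_mul]
          rw [ha3 j hj]
          ring }
  have hW : (W : Set ((Fin (d - 1) → F) × F)) = evenSubset F d i := rfl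
  let f : W →ₗ[F] (Fin m → F) :=
    { toFun := fun x k => x.1.1 ⟨2 * (k : ℕ), by omega⟩
      map_add' := fun _ _ => rfl
      map_smul' := fun _ _ => rfl }
  have finj : Function.Injective f := by
    rw [← LinearMap.ker_eq_bot, LinearMap.ker_eq_bot']
    rintro ⟨⟨x, y⟩, hx1, hx2, hx3⟩ h0
    have hev : ∀ (k : ℕ) (hk : 2 * k < d - 1), x ⟨2 * k, hk⟩ = 0 := by
      intro k hk
      by_cases hkm : k < m
      · exact congrFun h0 ⟨k, hkm⟩
      · exact hx2 _ (by simp only; omega)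
    apply Subtype.ext
    refine Prod.ext ?_ hx1
    funext j
    change x j = 0
    obtain ⟨j, hj⟩ := j
    rcases Nat.even_or_odd' j with ⟨k, rfl | rfl⟩
    · exact hev k hj
    · have h := hx3 ⟨2 * k + 1, hj⟩ ⟨k, rfl⟩
      simp only [Nat.add_sub_cancel] at h
      rw [h, hev, mul_zero]
  have fsurj : Function.Surjective f := by
    intro s
    refine ⟨⟨(fun j => if h : (j : ℕ) / 2 < m then
      (if (j : ℕ) % 2 = 0 then s ⟨(j : ℕ) / 2, h⟩ else i * s ⟨(j : ℕ) / 2, h⟩) else 0, 0),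
      rfl, ?_, ?_⟩, ?_⟩
    · intro j hj
      exact dif_neg (by omega)
    · rintro ⟨j, hj⟩ ⟨k, hk⟩
      simp only at hk
      subst hk
      have h1 : (2 * k + 1) / 2 = k := by omega
      have h2 : (2 * k + 1) % 2 ≠ 0 := by omega
      have hk : k < m := by omega
      simp [h1, hk]
    · funext k
      change (if h : (2 * (k : ℕ)) / 2 < m then
        (if (2 * (k : ℕ)) % 2 = 0 then s ⟨(2 * (k : ℕ)) / 2, h⟩
          else i * s ⟨(2 * (k : ℕ)) / 2, h⟩) else 0) = s k
      simp
  let e : W ≃ₗ[F] (Fin m → F) := LinearEquiv.ofBijective f ⟨finj, fsurj⟩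
  refine ⟨W, hW, ?_, ?_, ?_⟩
  · rw [hm, e.finrank_eq]
    simp
  · rw [hm]
    have h : Nat.card (evenSubset F d i) = Nat.card (Fin m → F) := Nat.card_congr e.toEquiv
    rw [h]
    simp
  · rintro ⟨x, y⟩ ⟨hx1, hx2, hx3⟩
    simp only at hx1 hx2 hx3
    change y = ∑ j, x j * x j
    rw [hx1]
    let g : ℕ → F := fun n => if h : n < d - 1 then x ⟨n, h⟩ * x ⟨n, h⟩ else 0
    have hg : ∑ j, x j * x j = ∑ n ∈ Finset.range (d - 1), g n := by
      rw [← Fin.sum_univ_eq_sum_range]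
      refine Finset.sum_congr rfl fun j _ => ?_
      simp [g]
    have hz : ∀ k, k ≤ m → ∑ n ∈ Finset.range (2 * k), g n = 0 := by
      intro k
      induction k with
      | zero => simp
      | succ k ih =>
        intro hk
        rw [show 2 * (k + 1) = 2 * k + 1 + 1 by ring, Finset.sum_range_succ,
          Finset.sum_range_succ, ih (by omega)]
        have h1 : 2 * k < d - 1 := by omega
        have h2 : 2 * k + 1 < d - 1 := by omega
        have h := hx3 ⟨2 * k + 1, h2⟩ ⟨k, rfl⟩
        simp only [Nat.add_sub_cancel] at h
        simp only [g, dif_pos h1, dif_pos h2, h]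
        linear_combination (x ⟨2 * k, h1⟩) ^ 2 * hi
    have hlast : g (2 * m) = 0 := by
      have h1 : 2 * m < d - 1 := by omega
      simp only [g, dif_pos h1]
      rw [hx2 ⟨2 * m, h1⟩ (by simp only; omega), mul_zero]
    rw [hg, show d - 1 = 2 * m + 1 by omega, Finset.sum_range_succ, hz m le_rfl, hlast, add_zero]
end
end

section
/- Let d ≥ 3 be odd and let F_q be a finite field with q elements of characteristic greater than two in which −1 is a square, say i² = −1 for some i ∈ F_q. Then the set H = { (s₁, i s₁, …, s_k, i s_k, …, s_{(d−1)/2}, i s_{(d−1)/2}, 0) : s_k ∈ F_q, k = 1, …, (d−1)/2 } is an F_q-linear subspace of F_q^d of dimension (d−1)/2 (so |H| = q^{(d−1)/2}) which is contained in the paraboloid S. -/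
open Finset

noncomputable section

/-- The set `H = {(s₁, i s₁, …, s_{(d-1)/2}, i s_{(d-1)/2}, 0)}` in
`F^d = F^{d-1} × F` (for odd `d`): the last component vanishes, and each
odd-indexed coordinate of the first component is `i` times the preceding one. -/
def oddSubset (F : Type) [CommRing F] (d : ℕ) (i : F) : Set ((Fin (d - 1) → F) × F) :=
  {x | x.2 = 0 ∧
    ∀ j : Fin (d - 1), Odd (j : ℕ) →
      x.1 j = i * x.1 ⟨(j : ℕ) - 1, lt_of_le_of_lt (Nat.sub_le _ _) j.isLt⟩}

theorem sum_range_two_mul_zero {F : Type} [Field F] (g : ℕ → F) (m : ℕ)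
    (h : ∀ k < m, g (2 * k) + g (2 * k + 1) = 0) : ∑ j ∈ range (2 * m), g j = 0 := by
  induction m with
  | zero => simp
  | succ m ih =>
    rw [show 2 * (m + 1) = 2 * m + 1 + 1 by ring, sum_range_succ, sum_range_succ,
      ih (fun k hk => h k (by omega)), zero_add, h m (by omega)]

/-- The set `H` as a submodule. -/
def oddSubmodule (F : Type) [Field F] (d : ℕ) (i : F) : Submodule F ((Fin (d - 1) → F) × F) where
  carrier := oddSubset F d i
  zero_mem' := by simp [oddSubset]
  add_mem' := by
    rintro x y ⟨hx, hx'⟩ ⟨hy, hy'⟩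
    refine ⟨by simp [hx, hy], fun j hj => ?_⟩
    simp only [Prod.fst_add, Pi.add_apply]
    rw [hx' j hj, hy' j hj]
    ring
  smul_mem' := by
    rintro c x ⟨hx, hx'⟩
    refine ⟨by simp [hx], fun j hj => ?_⟩
    simp only [Prod.smul_fst, Pi.smul_apply, smul_eq_mul]
    rw [hx' j hj]
    ring

/-- Parametrization of `H` by the even coordinates. -/
def oddEquiv (F : Type) [Field F] (m : ℕ) (i : F) :
    oddSubmodule F (2 * m + 1) i ≃ₗ[F] (Fin m → F) where
  toFun x := fun k => x.1.1 ⟨2 * k, by have := k.isLt; omega⟩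
  map_add' x y := rfl
  map_smul' c x := rfl
  invFun s := ⟨(fun j => (if Odd (j : ℕ) then i else 1) *
      s ⟨(j : ℕ) / 2, by have := j.isLt; omega⟩, 0), rfl, by
    rintro j hj
    obtain ⟨t, ht⟩ := hj
    have h1 : Odd (j : ℕ) := ⟨t, ht⟩
    have h2 : ¬ Odd ((j : ℕ) - 1) := by rw [Nat.not_odd_iff_even]; exact ⟨t, by omega⟩
    have h3 : ((j : ℕ) - 1) / 2 = (j : ℕ) / 2 := by omega
    simp only [h1, h2, h3, if_true, if_false, one_mul]⟩
  left_inv := by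
    rintro ⟨⟨x, y⟩, hy, hx⟩
    apply Subtype.ext
    refine Prod.ext (funext fun j => ?_) hy.symm
    by_cases hj : Odd (j : ℕ)
    · have h := hx j hj
      obtain ⟨t, ht⟩ := id hj
      have h3 : 2 * ((j : ℕ) / 2) = (j : ℕ) - 1 := by omega
      simp only [hj, h3, if_true]
      exact h.symm
    · have h3 : 2 * ((j : ℕ) / 2) = (j : ℕ) := by
        rw [Nat.not_odd_iff_even] at hj
        obtain ⟨t, ht⟩ := hj
        omega
      simp only [hj, h3, if_false, one_mul]
  right_inv := by
    intro s
    funext k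
    simp

/-- For odd `d ≥ 3` and `i² = -1` in `F`, the set `H` is an
`F`-linear subspace of `F^d` of dimension `(d-1)/2` (so `|H| = q^{(d-1)/2}`)
contained in the paraboloid `S`. -/
theorem odd_subspace_in_paraboloid (d : ℕ) (hd3 : 3 ≤ d) (hdodd : Odd d)
    (F : Type) [Field F] [Fintype F] [DecidableEq F] (hchar : 2 < ringChar F)
    (i : F) (hi : i ^ 2 = -1) :
    ∃ W : Submodule F ((Fin (d - 1) → F) × F),
      (W : Set ((Fin (d - 1) → F) × F)) = oddSubset F d i ∧
      Module.finrank F W = (d - 1) / 2 ∧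
      Nat.card (oddSubset F d i) = Fintype.card F ^ ((d - 1) / 2) ∧
      oddSubset F d i ⊆ {x : (Fin (d - 1) → F) × F | x.2 = dotp x.1 x.1} := by
  obtain ⟨m, rfl⟩ := hdodd
  have hm : (2 * m + 1 - 1) / 2 = m := by omega
  refine ⟨oddSubmodule F (2 * m + 1) i, rfl, ?_, ?_, ?_⟩
  · rw [(oddEquiv F m i).finrank_eq, hm]
    simp
  · rw [hm]
    have h := Nat.card_congr (oddEquiv F m i).toEquiv
    refine Eq.trans h ?_
    simp [Nat.card_eq_fintype_card]
  · rintro ⟨x, y⟩ ⟨hy, hx⟩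
    refine Eq.trans hy (Eq.symm ?_)
    change ∑ j : Fin (2 * m), x j * x j = 0
    rw [Finset.sum_fin_eq_sum_range]
    apply sum_range_two_mul_zero
    intro k hk
    have h := hx ⟨2 * k + 1, by omega⟩ ⟨k, rfl⟩
    simp only [Nat.add_sub_cancel] at h
    rw [dif_pos (by omega), dif_pos (by omega)]
    rw [h]
    linear_combination (x ⟨2 * k, by omega⟩) ^ 2 * hi
end
end
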